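/- arXiv:2301.12841 — 3 statements merged into one kernel-verified Lean document; each statement's English description precedes it below -/
import Mathlib

section
/- Let q be an odd prime power with q ≥ 5, let d ≥ 2 be even, let k ≥ 2 be an integer, and let r ∈ F_q^*. If 𝓔 ⊆ F_q^d has size at least (31 + 10·C(k,2))·q^(d/2) (where C(k,2) = k(k−1)/2), then 𝓔 contains a pair of k-stars with dilation ratio r. -/
/-!
Write `q = |F|`, `n = |𝓔|`, `d = 2m`, and let `ν t` be the number of pairs in `𝓔 × 𝓔` whose
difference has norm `t`. The proof shows that the energy `∑_{t ≠ 0} ν t * ν (r t)` is at least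
`n ^ 4 / (2 q)` (`energy_bound`), and then finds the two stars by pigeonhole.

*Energy.* Fix a primitive additive character `ψ`. For `s ≠ 0` the function `x ↦ ψ (s ‖x‖)` on
`F ^ d` has Fourier transform `K ψ (-‖z‖ / (4 s))`. Since `d` is even, `K` is real, independent of
`s`, and `|K| = q ^ m` (`sum_char_norm2`). Hence `K * ∑ t, ν t ψ (s t) = ∑ u, w u ψ (-u / (4 s))`,
where `w u ≥ 0` is the sum of `|∑_{x ∈ 𝓔} ψ (x ⬝ z)| ^ 2` over `‖z‖ = u`. Summing this identity and
its product with its `-r s` version over `s` gives exact formulas for `ν 0` and `∑ t, ν t * ν (r t)`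
in terms of `w` (`duality`). The value `ν 0` may be as large as about `q ^ m * n` when `𝓔` contains
isotropic subspaces, so `ν 0 ^ 2` can exceed `n ^ 4 / q`; but then `w 0` is large too, and the
nonnegative terms `w u * w (u / r)` contain `w 0 ^ 2`, which compensates (`energy_arith`).

*Stars.* The energy equals the sum over centres `x, y ∈ 𝓔` of the number of `(x', y') ∈ 𝓔 × 𝓔` with
`‖y' - y‖ = r ‖x' - x‖ ≠ 0` (`energy_eq`). If more than `2 (k - 1) n` pairs belong to one choice
of centres, a greedy matching picks `k` of them with distinct `x'` and distinct `y'`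
(`exists_matching`), which gives two stars. Otherwise `n ^ 4 / (2 q) ≤ 2 (k - 1) n ^ 3`, contradicting
`n ≥ (31 + 5 k (k - 1)) q`.
-/

/-- `norm2 x = x₁² + ⋯ + x_d²` for `x ∈ F_q^d`. -/
def norm2 {F : Type*} [Field F] {d : ℕ} (x : Fin d → F) : F := ∑ i, x i ^ 2

/-- `𝓔` contains a pair of `k`-stars with dilation ratio `r`: there are distinct
`x₁, …, x_{k+1} ∈ 𝓔` and distinct `y₁, …, y_{k+1} ∈ 𝓔` with
`‖y_i − y₁‖ = r‖x_i − x₁‖ ≠ 0` for `i = 2, …, k+1`. -/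
def ContainsPairOfStars {F : Type*} [Field F] {d : ℕ}
    (𝓔 : Finset (Fin d → F)) (k : ℕ) (r : F) : Prop :=
  ∃ x y : Fin (k + 1) → (Fin d → F),
    Function.Injective x ∧ Function.Injective y ∧
    (∀ i, x i ∈ 𝓔) ∧ (∀ i, y i ∈ 𝓔) ∧
    ∀ i : Fin (k + 1), i ≠ 0 →
      norm2 (y i - y 0) = r * norm2 (x i - x 0) ∧ r * norm2 (x i - x 0) ≠ 0

/-- `𝓔` contains a pair of `k`-paths with dilation ratio `r`: there are distinct
`x₁, …, x_{k+1} ∈ 𝓔` and distinct `y₁, …, y_{k+1} ∈ 𝓔` with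
`‖y_{i+1} − y_i‖ = r‖x_{i+1} − x_i‖ ≠ 0` for `i = 1, …, k`. -/
def ContainsPairOfPaths {F : Type*} [Field F] {d : ℕ}
    (𝓔 : Finset (Fin d → F)) (k : ℕ) (r : F) : Prop :=
  ∃ x y : Fin (k + 1) → (Fin d → F),
    Function.Injective x ∧ Function.Injective y ∧
    (∀ i, x i ∈ 𝓔) ∧ (∀ i, y i ∈ 𝓔) ∧
    ∀ i : Fin k,
      norm2 (y i.succ - y i.castSucc) = r * norm2 (x i.succ - x i.castSucc) ∧
      r * norm2 (x i.succ - x i.castSucc) ≠ 0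

section Proof
open Finset AddChar

/-! ### Quadratic exponential sums -/

variable {F : Type*} [Field F] [Fintype F]

omit [Fintype F] in
lemma char_sum_eq_prod {ι : Type*} (ψ : AddChar F ℂ) (A : Finset ι) (f : ι → F) :
    ψ (∑ i ∈ A, f i) = ∏ i ∈ A, ψ (f i) := by
  classical
  induction A using Finset.induction_on with
  | empty => simp
  | insert a A ha ih => rw [sum_insert ha, prod_insert ha, AddChar.map_add_eq_mul, ih]

lemma exists_primitive : ∃ ψ : AddChar F ℂ, ψ.IsPrimitive := by
  obtain ⟨ψ, hψ⟩ := AddChar.exists_apply_ne_zero.2 (one_ne_zero (α := F))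
  exact ⟨ψ, .of_ne_one fun h => hψ (by simp [h])⟩

/-- Each `t` has `1 + η t` square roots, `η` the quadratic character, and `∑ t, ψ (s * t) = 0`. -/
lemma sum_char_sq [DecidableEq F] (hF : ringChar F ≠ 2) {ψ : AddChar F ℂ} (hψ : ψ.IsPrimitive)
    {s : F} (hs : s ≠ 0) :
    ∑ x : F, ψ (s * x ^ 2) =
      (quadraticChar F s : ℂ) * gaussSum ((quadraticChar F).ringHomComp (Int.castRingHom ℂ)) ψ := by
  have h1 : ∑ x : F, ψ (s * x ^ 2) = ∑ t : F, ((quadraticChar F t : ℂ) + 1) * ψ (s * t) := by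
    rw [← Finset.sum_fiberwise (s := univ) (g := fun x : F => x ^ 2)]
    refine Finset.sum_congr rfl fun t _ => ?_
    rw [Finset.sum_congr rfl (g := fun _ => ψ (s * t))
      (fun x hx => by rw [(mem_filter.1 hx).2]), sum_const, nsmul_eq_mul]
    congr 1
    have := quadraticChar_card_sqrts hF t
    rw [Set.toFinset_ofPred] at this
    exact_mod_cast this
  have h2 : ∑ t : F, ψ (s * t) = 0 := by
    simpa [hs, mul_comm] using AddChar.sum_mulShift s hψ
  simp_rw [add_mul, one_mul, sum_add_distrib] at h1
  rw [h1, h2, add_zero]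
  have h3 := gaussSum_mulShift ((quadraticChar F).ringHomComp (Int.castRingHom ℂ)) ψ (Units.mk0 s hs)
  rw [← h3]
  have h4 : (quadraticChar F s : ℂ) * (quadraticChar F s : ℂ) = 1 := by
    have := quadraticChar_sq_one hs
    rw [← sq]; exact_mod_cast this
  simp only [Units.val_mk0, MulChar.ringHomComp_apply, eq_intCast]
  rw [← mul_assoc, h4, one_mul]
  simp [gaussSum, AddChar.mulShift_apply]

/-- Completing the square. -/
lemma sum_char_quadratic (hF : ringChar F ≠ 2) {ψ : AddChar F ℂ} {s : F} (hs : s ≠ 0) (b : F) :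
    ∑ x : F, ψ (s * x ^ 2 + b * x) = (∑ x : F, ψ (s * x ^ 2)) * ψ (-(4 * s)⁻¹ * b ^ 2) := by
  have h2 : (2 : F) ≠ 0 := Ring.two_ne_zero hF
  have h4 : (4 : F) ≠ 0 := by
    rw [show (4 : F) = 2 * 2 by norm_num]; exact mul_ne_zero h2 h2
  rw [sum_mul, ← Equiv.sum_comp (Equiv.subRight (b / (2 * s)))]
  refine Finset.sum_congr rfl fun x _ => ?_
  rw [← AddChar.map_add_eq_mul]
  congr 1
  simp only [Equiv.subRight_apply]
  field_simp
  ring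

/-- Fourier transform of `x ↦ ψ (s * ‖x‖)` in even dimension: the factor `η s ^ d` is `1`, so the
constant `K` is real and does not depend on `s`. -/
lemma sum_char_norm2 (hF : ringChar F ≠ 2) {ψ : AddChar F ℂ} (hψ : ψ.IsPrimitive)
    {d m : ℕ} (hd : d = 2 * m) :
    ∃ K : ℝ, |K| = (Fintype.card F : ℝ) ^ m ∧ ∀ s : F, s ≠ 0 → ∀ z : Fin d → F,
      ∑ x : Fin d → F, ψ (s * norm2 x + ∑ i, z i * x i) = K * ψ (-(4 * s)⁻¹ * norm2 z) := by
  classical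
  set g := gaussSum ((quadraticChar F).ringHomComp (Int.castRingHom ℂ)) ψ with hg
  have hg2 : g ^ 2 = ((quadraticChar F (-1) : ℤ) : ℂ) * Fintype.card F := by
    refine gaussSum_sq ?_ ?_ hψ
    · exact (MulChar.ringHomComp_ne_one_iff (RingHom.injective_int _)).2 (quadraticChar_ne_one hF)
    · exact (quadraticChar_isQuadratic F).comp _
  refine ⟨(quadraticChar F (-1) : ℝ) ^ m * (Fintype.card F : ℝ) ^ m, ?_, fun s hs z => ?_⟩
  · have : |(quadraticChar F (-1) : ℝ)| = 1 := by
      rw [abs_eq zero_le_one]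
      have h1 : (-1 : F) ≠ 0 := neg_ne_zero.2 one_ne_zero
      exact_mod_cast quadraticChar_dichotomy h1
    rw [abs_mul, abs_pow, this, one_pow, one_mul, abs_of_nonneg (by positivity)]
  · have h1 : ∀ x : Fin d → F, ψ (s * norm2 x + ∑ i, z i * x i)
        = ∏ i, ψ (s * x i ^ 2 + z i * x i) := by
      intro x
      rw [norm2, mul_sum, ← sum_add_distrib, char_sum_eq_prod]
    simp_rw [h1]
    rw [← Fintype.prod_sum (fun i t => ψ (s * t ^ 2 + z i * t))]
    simp_rw [sum_char_quadratic hF hs, sum_char_sq hF hψ hs]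
    rw [prod_mul_distrib, ← char_sum_eq_prod, ← mul_sum, prod_const, card_univ,
      Fintype.card_fin]
    have h4 : ((quadraticChar F s : ℤ) : ℂ) ^ 2 = 1 := by
      exact_mod_cast quadraticChar_sq_one hs
    have h5 : (((quadraticChar F s : ℤ) : ℂ) * g) ^ d
        = ((quadraticChar F (-1) : ℤ) : ℂ) ^ m * (Fintype.card F : ℂ) ^ m := by
      rw [hd, pow_mul, mul_pow, h4, hg2, one_mul, mul_pow]
    rw [← hg, h5]
    push_cast
    rfl

/-! ### Transforms of weights on the field and duality -/

/-- The (unnormalised) Fourier transform of a real weight `a` on `F`, at frequency `s`. -/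
noncomputable def transform (ψ : AddChar F ℂ) (a : F → ℝ) (s : F) : ℂ :=
  ∑ t, (a t : ℂ) * ψ (s * t)

lemma transform_zero (ψ : AddChar F ℂ) (a : F → ℝ) :
    transform ψ a 0 = ((∑ t, a t : ℝ) : ℂ) := by
  simp [transform]

lemma sum_transform {ψ : AddChar F ℂ} (hψ : ψ.IsPrimitive) (a : F → ℝ) :
    ∑ s, transform ψ a s = Fintype.card F * (a 0 : ℂ) := by
  classical
  unfold transform
  rw [sum_comm]
  simp_rw [← mul_sum, AddChar.sum_mulShift _ hψ]
  simp [mul_comm]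

/-- Correlation of `a` with its dilate by `r`, expressed on the Fourier side. -/
lemma sum_transform_mul {ψ : AddChar F ℂ} (hψ : ψ.IsPrimitive) (a : F → ℝ) (r : F) :
    ∑ s, transform ψ a s * transform ψ a (-r * s)
      = Fintype.card F * ((∑ t, a t * a (r * t) : ℝ) : ℂ) := by
  classical
  unfold transform
  simp_rw [sum_mul_sum]
  have h : ∀ s t u : F, (a t : ℂ) * ψ (s * t) * ((a u : ℂ) * ψ (-r * s * u))
      = (a u : ℂ) * a t * ψ (s * (t - r * u)) := by
    intro s t u
    rw [show s * (t - r * u) = s * t + -r * s * u by ring, AddChar.map_add_eq_mul]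
    ring
  simp_rw [h]
  rw [sum_comm]
  simp_rw [fun y : F => sum_comm (s := (univ : Finset F)) (t := (univ : Finset F))
    (f := fun s u => (a u : ℂ) * a y * ψ (s * (y - r * u)))]
  rw [sum_comm]
  simp_rw [← mul_sum, AddChar.sum_mulShift _ hψ, sub_eq_zero]
  simp [mul_sum, mul_comm]

/-- The involution `s ↦ -1 / (4 s)` of `F`, fixing `0` by the convention `0⁻¹ = 0`. -/
def negInvEquiv (h4 : (4 : F) ≠ 0) : F ≃ F :=
  Function.Involutive.toPerm (fun s => -(4 * s)⁻¹) fun s => by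
    by_cases hs : s = 0
    · simp [hs]
    · field_simp

/-- The relation `K * â s = ŵ (-1 / (4 s))` for `s ≠ 0` determines the value at `0` and the dilated
self-correlation of `a` from those of `w`. The relation fails at `s = 0`, and the difference of the
two sides there supplies the total masses. -/
lemma duality (h4 : (4 : F) ≠ 0) {ψ : AddChar F ℂ} (hψ : ψ.IsPrimitive) {a w : F → ℝ} {K : ℝ}
    (h : ∀ s, s ≠ 0 → K * transform ψ a s = transform ψ w (-(4 * s)⁻¹)) {r : F} (hr : r ≠ 0) :
    K * (Fintype.card F * a 0 - ∑ t, a t) = Fintype.card F * w 0 - ∑ t, w t ∧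
    K ^ 2 * (Fintype.card F * ∑ t, a t * a (r * t) - (∑ t, a t) ^ 2)
      = Fintype.card F * ∑ t, w t * w (r⁻¹ * t) - (∑ t, w t) ^ 2 := by
  have e1 : ∑ s, transform ψ w (-(4 * s)⁻¹) = ∑ s, transform ψ w s :=
    Equiv.sum_comp (negInvEquiv h4) _
  have e2 : ∑ s, transform ψ w (-(4 * s)⁻¹) * transform ψ w (-r⁻¹ * (-(4 * s)⁻¹))
      = ∑ s, transform ψ w s * transform ψ w (-r⁻¹ * s) :=
    Equiv.sum_comp (negInvEquiv h4) fun s => transform ψ w s * transform ψ w (-r⁻¹ * s)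
  constructor
  · have key : ∑ s, (K * transform ψ a s - transform ψ w (-(4 * s)⁻¹))
        = K * transform ψ a 0 - transform ψ w (-(4 * 0)⁻¹) :=
      Finset.sum_eq_single 0 (fun s _ hs => by rw [h s hs, sub_self]) (by simp)
    rw [sum_sub_distrib, ← mul_sum, e1, sum_transform hψ, sum_transform hψ] at key
    simp only [mul_zero, inv_zero, neg_zero, transform_zero] at key
    have : (K : ℂ) * (Fintype.card F * a 0 - (∑ t, a t : ℝ))
        = Fintype.card F * w 0 - (∑ t, w t : ℝ) := by linear_combination key
    exact_mod_cast this
  · have key : ∑ s, ((K : ℂ) ^ 2 * (transform ψ a s * transform ψ a (-r * s))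
          - transform ψ w (-(4 * s)⁻¹) * transform ψ w (-r⁻¹ * (-(4 * s)⁻¹)))
        = (K : ℂ) ^ 2 * (transform ψ a 0 * transform ψ a (-r * 0))
          - transform ψ w (-(4 * 0)⁻¹) * transform ψ w (-r⁻¹ * (-(4 * 0)⁻¹)) := by
      refine Finset.sum_eq_single 0 (fun s _ hs => ?_) (by simp)
      rw [show -r⁻¹ * (-(4 * s)⁻¹) = -(4 * (-r * s))⁻¹ by field_simp, ← h s hs,
        ← h (-r * s) (mul_ne_zero (neg_ne_zero.2 hr) hs)]
      ring
    rw [sum_sub_distrib, ← mul_sum, e2, sum_transform_mul hψ, sum_transform_mul hψ] at key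
    simp only [mul_zero, inv_zero, neg_zero, transform_zero] at key
    have : (K : ℂ) ^ 2 * (Fintype.card F * (∑ t, a t * a (r * t) : ℝ) - (∑ t, a t : ℝ) ^ 2)
        = Fintype.card F * (∑ t, w t * w (r⁻¹ * t) : ℝ) - (∑ t, w t : ℝ) ^ 2 := by
      linear_combination key
    exact_mod_cast this

/-- The pushforward to `F` of the weight `c` on `A` under the map `N`. -/
noncomputable def pushforward {ι : Type*} [DecidableEq F] (A : Finset ι) (N : ι → F)
    (c : ι → ℝ) (t : F) : ℝ :=
  ∑ i ∈ A with N i = t, c i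

lemma transform_pushforward {ι : Type*} [DecidableEq F] (ψ : AddChar F ℂ) (A : Finset ι) (N : ι → F)
    (c : ι → ℝ) (s : F) :
    transform ψ (pushforward A N c) s = ∑ i ∈ A, (c i : ℂ) * ψ (s * N i) := by
  unfold transform pushforward
  rw [← Finset.sum_fiberwise A N]
  refine sum_congr rfl fun t _ => ?_
  push_cast
  rw [sum_mul]
  exact sum_congr rfl fun i hi => by rw [(mem_filter.1 hi).2]

omit [Field F] in
lemma sum_pushforward {ι : Type*} [DecidableEq F] (A : Finset ι) (N : ι → F) (c : ι → ℝ) :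
    ∑ t, pushforward A N c t = ∑ i ∈ A, c i := Finset.sum_fiberwise A N c


/-! ### The energy estimate -/

/-- The squared modulus of the Fourier transform of the indicator function of `E`, at `z`. -/
noncomputable def fourierWeight {d : ℕ} (ψ : AddChar F ℂ) (E : Finset (Fin d → F))
    (z : Fin d → F) : ℝ :=
  Complex.normSq (∑ x ∈ E, ψ (∑ i, x i * z i))

lemma fourierWeight_eq {d : ℕ} (ψ : AddChar F ℂ) (E : Finset (Fin d → F)) (z : Fin d → F) :
    (fourierWeight ψ E z : ℂ) = ∑ p ∈ E ×ˢ E, ψ (∑ i, (p.2 - p.1) i * z i) := by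
  rw [fourierWeight, ← Complex.mul_conj, map_sum, sum_mul_sum, ← sum_product',
    Finset.sum_product_right, Finset.sum_product]
  refine sum_congr rfl fun x _ => sum_congr rfl fun y _ => ?_
  rw [← AddChar.map_neg_eq_conj, ← AddChar.map_add_eq_mul]
  congr 1
  simp only [Pi.sub_apply, sub_mul, sum_sub_distrib]
  ring

/-- Plancherel for the indicator function of `E`. -/
lemma sum_fourierWeight {d : ℕ} {ψ : AddChar F ℂ} (hψ : ψ.IsPrimitive) (E : Finset (Fin d → F)) :
    ∑ z, fourierWeight ψ E z = (Fintype.card F : ℝ) ^ d * E.card := by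
  classical
  -- orthogonality of characters on `F ^ d`, coordinate by coordinate
  have h0 : ∀ v : Fin d → F, ∑ z : Fin d → F, ψ (∑ i, v i * z i)
      = if v = 0 then (Fintype.card F : ℂ) ^ d else 0 := by
    intro v
    simp_rw [char_sum_eq_prod]
    rw [← Fintype.prod_sum (fun i t => ψ (v i * t))]
    simp_rw [mul_comm (v _), AddChar.sum_mulShift _ hψ]
    split_ifs with hv
    · simp [hv]
    · obtain ⟨i, hi⟩ := Function.ne_iff.1 hv
      exact prod_eq_zero (mem_univ i) (by simpa using hi)
  have : ((∑ z, fourierWeight ψ E z : ℝ) : ℂ) = (Fintype.card F : ℂ) ^ d * E.card := by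
    push_cast
    simp_rw [fourierWeight_eq]
    rw [sum_comm]
    simp_rw [h0, sub_eq_zero]
    rw [sum_product]
    simp [mul_comm]
  exact_mod_cast this

/-- The real inequality behind `energy_bound`, with `n = |E|`, `P = ∑ t, ν t * ν (r * t)`, `v = ν 0`,
`w₀ = w 0` and `Q = ∑ t, w t * w (r⁻¹ * t)`. With `M = w₀ / K` one has `q v = n² + q M - K n` and
`q P ≥ n⁴ + q M² - K² n²`, so the `M²` terms cancel in `q² (P - v²)`; the remaining error terms are
controlled by `|M| ≤ |K| n ≤ n² / 41`. -/
lemma energy_arith {q n K P Q v w₀ : ℝ} (hq : 5 ≤ q) (hK : 0 < |K|) (hn41 : 41 * |K| ≤ n)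
    (hw : 0 ≤ w₀) (hwle : w₀ ≤ K ^ 2 * n) (hww : w₀ ^ 2 ≤ Q)
    (e1 : K * (q * v - n ^ 2) = q * w₀ - K ^ 2 * n)
    (e2 : K ^ 2 * (q * P - (n ^ 2) ^ 2) = q * Q - (K ^ 2 * n) ^ 2) :
    n ^ 4 ≤ 2 * q * (P - v ^ 2) := by
  have hK0 : K ≠ 0 := abs_pos.1 hK
  obtain ⟨M, rfl⟩ : ∃ M, w₀ = K * M := ⟨w₀ / K, by field_simp⟩
  have e1' : q * v = n ^ 2 + q * M - K * n := by
    apply mul_left_cancel₀ hK0; linear_combination e1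
  have e2' : n ^ 4 + q * M ^ 2 - K ^ 2 * n ^ 2 ≤ q * P := by
    have : 0 < K ^ 2 := by positivity
    refine le_of_mul_le_mul_left ?_ this
    have := mul_le_mul_of_nonneg_left hww (by linarith : 0 ≤ q)
    nlinarith
  have hn : 0 < n := by linarith
  have hb : |K| * n * 41 ≤ n ^ 2 := by nlinarith
  have hMb : |M| ≤ |K| * n := by
    refine le_of_mul_le_mul_left ?_ hK
    rw [← abs_mul, abs_of_nonneg hw, ← mul_assoc, ← sq, sq_abs]; exact hwle
  have hKM : 0 ≤ M * (K * n) := by nlinarith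
  have hbsq : K ^ 2 * n ^ 2 = (|K| * n) ^ 2 := by rw [mul_pow, sq_abs]
  have hKn : -(|K| * n) ≤ K * n := by nlinarith [neg_abs_le K]
  have hM := (abs_le.1 hMb).2
  set b := |K| * n with hbdef
  have hb0 : 0 < b := by positivity
  have hbb : b ^ 2 * 1681 ≤ n ^ 4 := by nlinarith
  have hnb : n ^ 2 * b * 41 ≤ n ^ 4 := by nlinarith [mul_le_mul_of_nonneg_left hb (sq_nonneg n)]
  have main : (q - 1) * n ^ 4 - (q + 1) * b ^ 2 - 2 * (q + 1) * (n ^ 2 * b)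
      ≤ q ^ 2 * (P - v ^ 2) := by
    have t1 : q ^ 2 * v ^ 2 = (n ^ 2 + q * M - K * n) ^ 2 := by rw [← e1']; ring
    have t2 := mul_le_mul_of_nonneg_left e2' (by linarith : 0 ≤ q)
    have t3 := mul_le_mul_of_nonneg_left hM (by positivity : 0 ≤ 2 * n ^ 2 * q)
    have t4 := mul_le_mul_of_nonneg_left hKn (by positivity : 0 ≤ 2 * n ^ 2)
    have t5 := mul_nonneg (by linarith : 0 ≤ 2 * q) hKM
    rw [hbsq] at t2
    have t6 : (K * n) ^ 2 = b ^ 2 := by rw [← hbsq]; ring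
    linear_combination t1 + t2 + t3 + t4 + t5 + t6
  have hn4 : 0 < n ^ 4 := by positivity
  have t1 : (q + 1) * b ^ 2 ≤ (q + 1) * (n ^ 4 / 1681) :=
    mul_le_mul_of_nonneg_left (by linarith) (by linarith)
  have t2 : 2 * (q + 1) * (n ^ 2 * b) ≤ 2 * (q + 1) * (n ^ 4 / 41) :=
    mul_le_mul_of_nonneg_left (by linarith) (by linarith)
  have t3 : q * n ^ 4 ≤ 2 * (q ^ 2 * (P - v ^ 2)) := by
    linarith [mul_le_mul_of_nonneg_right hq hn4.le]
  have : 0 < q := by linarith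
  refine le_of_mul_le_mul_left ?_ this
  linarith

/-- The number of pairs of differences with norms in ratio `r`, not counting norm zero, is at least
`n ^ 4 / (2 q)`. -/
lemma energy_bound (hF : ringChar F ≠ 2) [DecidableEq F] {d m : ℕ} (hd : d = 2 * m)
    {r : F} (hr : r ≠ 0)
    (hq : 5 ≤ Fintype.card F) (E : Finset (Fin d → F))
    (hE : 41 * (Fintype.card F : ℝ) ^ m ≤ E.card) (ν : F → ℝ)
    (hν : ν = pushforward (E ×ˢ E) (fun p => norm2 (p.2 - p.1)) 1) :
    (E.card : ℝ) ^ 4 ≤ 2 * Fintype.card F * (∑ t, ν t * ν (r * t) - ν 0 ^ 2) := by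
  have h2 : (2 : F) ≠ 0 := Ring.two_ne_zero hF
  have h4 : (4 : F) ≠ 0 := by
    rw [show (4 : F) = 2 * 2 by norm_num]; exact mul_ne_zero h2 h2
  obtain ⟨ψ, hψ⟩ := exists_primitive (F := F)
  obtain ⟨K, hK, hKs⟩ := sum_char_norm2 hF hψ hd
  set w : F → ℝ := pushforward univ norm2 (fourierWeight ψ E) with hw
  -- the Fourier transform formula at `-(4 * s)⁻¹` expands `K * ψ (s * ‖v‖)` in characters of `v`
  have hdual : ∀ s, s ≠ 0 → K * transform ψ ν s = transform ψ w (-(4 * s)⁻¹) := by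
    intro s hs
    rw [hν, hw, transform_pushforward, transform_pushforward]
    simp_rw [fourierWeight_eq, sum_mul]
    rw [sum_comm, mul_sum]
    refine sum_congr rfl fun p _ => ?_
    have := hKs (-(4 * s)⁻¹) (by simp [h4, hs]) (p.2 - p.1)
    rw [show -(4 * -(4 * s)⁻¹)⁻¹ = s by field_simp] at this
    simp only [Pi.one_apply, Complex.ofReal_one, one_mul]
    rw [← this]
    refine sum_congr rfl fun x _ => ?_
    rw [add_comm, AddChar.map_add_eq_mul]
  obtain ⟨e1, e2⟩ := duality h4 hψ hdual hr
  have hνs : ∑ t, ν t = (E.card : ℝ) ^ 2 := by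
    rw [hν, sum_pushforward]; simp [sq]
  have hK2 : K ^ 2 = (Fintype.card F : ℝ) ^ d := by
    rw [← sq_abs, hK, hd]; ring
  have hws : ∑ t, w t = K ^ 2 * E.card := by
    rw [hw, sum_pushforward, sum_fourierWeight hψ, hK2]
  have hw0 : ∀ t, 0 ≤ w t := fun t => sum_nonneg fun z _ => Complex.normSq_nonneg _
  have hwle : w 0 ≤ K ^ 2 * E.card := hws ▸ single_le_sum (fun t _ => hw0 t) (mem_univ 0)
  have hww : w 0 ^ 2 ≤ ∑ t, w t * w (r⁻¹ * t) := by
    have := single_le_sum (f := fun t => w t * w (r⁻¹ * t)) (fun t _ => mul_nonneg (hw0 _) (hw0 _))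
      (mem_univ 0)
    simpa [sq] using this
  rw [hνs, hws] at e1 e2
  have hq' : (5 : ℝ) ≤ Fintype.card F := by exact_mod_cast hq
  rw [← hK] at hE
  exact energy_arith hq' (by rw [hK]; positivity) hE (hw0 0) hwle hww e1 e2

/-! ### From the energy to stars -/

/-- A bipartite graph with more than `(k - 1) * (|A| + |B|)` edges has a matching of size `k`: a
matching of size `j` meets at most `j * (|A| + |B|)` edges, so it can be extended greedily. -/
lemma exists_matching {α β : Type*} [DecidableEq α] [DecidableEq β] {A : Finset α} {B : Finset β}
    {R : Finset (α × β)} (hR : R ⊆ A ×ˢ B) (k : ℕ) (hk : (k - 1) * (A.card + B.card) < R.card) :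
    ∃ (a : Fin k → α) (b : Fin k → β), Function.Injective a ∧ Function.Injective b ∧
      ∀ i, (a i, b i) ∈ R := by
  induction k with
  | zero => exact ⟨Fin.elim0, Fin.elim0, fun i => i.elim0, fun i => i.elim0, fun i => i.elim0⟩
  | succ k ih =>
    obtain ⟨a, b, ha, hb, hab⟩ := ih (lt_of_le_of_lt (by gcongr; omega) hk)
    have : ∃ p ∈ R, p.1 ∉ Set.range a ∧ p.2 ∉ Set.range b := by
      by_contra! hcon
      have hsub : R ⊆ (univ.image a) ×ˢ B ∪ A ×ˢ (univ.image b) := by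
        intro p hp
        have hp' := mem_product.1 (hR hp)
        by_cases h : p.1 ∈ Set.range a
        · exact mem_union_left _ (mem_product.2 ⟨by simpa using h, hp'.2⟩)
        · exact mem_union_right _ (mem_product.2 ⟨hp'.1, by simpa using hcon p hp h⟩)
      have h1 := (card_le_card hsub).trans (card_union_le _ _)
      rw [card_product, card_product, card_image_of_injective _ ha, card_image_of_injective _ hb,
        card_univ, Fintype.card_fin] at h1
      simp only [Nat.add_sub_cancel] at hk
      nlinarith
    obtain ⟨p, hp, hpa, hpb⟩ := this
    refine ⟨Fin.cons p.1 a, Fin.cons p.2 b, Fin.cons_injective_iff.2 ⟨hpa, ha⟩,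
      Fin.cons_injective_iff.2 ⟨hpb, hb⟩, fun i => ?_⟩
    cases i using Fin.cases with
    | zero => simpa using hp
    | succ i => simpa using hab i

omit [Fintype F] in
/-- A matching of size `k` yields two `k`-stars centred at `x` and `y`; the leaves differ from the
centres because the distances are nonzero. -/
lemma exists_star_of_card [DecidableEq F] {d k : ℕ} {r : F} {E : Finset (Fin d → F)}
    {x y : Fin d → F}
    (hx : x ∈ E) (hy : y ∈ E)
    (h : (k - 1) * (E.card + E.card) < ((E ×ˢ E).filter fun p =>
      norm2 (p.2 - y) = r * norm2 (p.1 - x) ∧ r * norm2 (p.1 - x) ≠ 0).card) :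
    ContainsPairOfStars E k r := by
  obtain ⟨a, b, ha, hb, hab⟩ := exists_matching (filter_subset _ _) k h
  simp only [mem_filter, mem_product] at hab
  have hz : norm2 (0 : Fin d → F) = 0 := by simp [norm2]
  refine ⟨Fin.cons x a, Fin.cons y b, Fin.cons_injective_iff.2 ⟨?_, ha⟩,
    Fin.cons_injective_iff.2 ⟨?_, hb⟩, ?_, ?_, ?_⟩
  · rintro ⟨i, rfl⟩
    exact (hab i).2.2 (by simp [hz])
  · rintro ⟨i, rfl⟩
    exact (hab i).2.2 (by rw [← (hab i).2.1]; simp [hz])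
  · exact Fin.cases hx fun i => (hab i).1.1
  · exact Fin.cases hy fun i => (hab i).1.2
  · exact Fin.cases (fun h => absurd rfl h) fun i _ => (hab i).2

/-- Double counting: the energy grouped by the centres `x` and `y`. -/
lemma energy_eq [DecidableEq F] {d : ℕ} {r : F} (hr : r ≠ 0) (E : Finset (Fin d → F)) (ν : F → ℝ)
    (hν : ν = pushforward (E ×ˢ E) (fun p => norm2 (p.2 - p.1)) 1) :
    ∑ t, ν t * ν (r * t) - ν 0 ^ 2 = ∑ x ∈ E, ∑ y ∈ E, (((E ×ˢ E).filter fun p =>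
      norm2 (p.2 - y) = r * norm2 (p.1 - x) ∧ r * norm2 (p.1 - x) ≠ 0).card : ℝ) := by
  have h1 : ∑ t, ν t * ν (r * t) - ν 0 ^ 2 = ∑ t, if t = 0 then 0 else ν t * ν (r * t) := by
    rw [← Finset.add_sum_erase _ _ (mem_univ (0 : F)),
      ← Finset.add_sum_erase _ (fun t => if t = 0 then 0 else ν t * ν (r * t)) (mem_univ (0 : F))]
    have : ∑ t ∈ univ.erase (0 : F), (if t = 0 then 0 else ν t * ν (r * t))
        = ∑ t ∈ univ.erase (0 : F), ν t * ν (r * t) :=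
      sum_congr rfl fun t ht => if_neg (ne_of_mem_erase ht)
    rw [this]
    simp [sq]
  have h2 : ∀ t, ν t = ∑ x ∈ E, ∑ x' ∈ E, if norm2 (x' - x) = t then 1 else 0 := by
    intro t
    rw [hν, pushforward, sum_filter, sum_product]
    rfl
  have h3 : ∀ t, (if t = 0 then 0 else ν t * ν (r * t)) = ∑ x ∈ E, ∑ y ∈ E, ∑ x' ∈ E, ∑ y' ∈ E,
      if norm2 (x' - x) = t then
        (if norm2 (y' - y) = r * norm2 (x' - x) ∧ r * norm2 (x' - x) ≠ 0 then (1 : ℝ) else 0)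
      else 0 := by
    intro t
    rw [h2 t, h2 (r * t)]
    split_ifs with ht
    · symm
      refine sum_eq_zero fun x _ => sum_eq_zero fun y _ => sum_eq_zero fun x' _ =>
        sum_eq_zero fun y' _ => ?_
      split_ifs with h h' <;> simp_all
    · rw [sum_mul_sum]
      refine sum_congr rfl fun x _ => sum_congr rfl fun y _ => ?_
      rw [sum_mul_sum]
      refine sum_congr rfl fun x' _ => sum_congr rfl fun y' _ => ?_
      by_cases h : norm2 (x' - x) = t
      · subst h; simp [hr, ht]
      · simp [h]
  rw [h1]
  simp_rw [h3]
  rw [sum_comm]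
  refine sum_congr rfl fun x _ => ?_
  rw [sum_comm]
  refine sum_congr rfl fun y _ => ?_
  rw [sum_comm, card_filter, sum_product]
  push_cast
  refine sum_congr rfl fun x' _ => ?_
  rw [sum_comm]
  refine sum_congr rfl fun y' _ => ?_
  simp

end Proof

/-- Let `q` be an odd prime power with `q ≥ 5`, let `d ≥ 2` be even,
`k ≥ 2`, `r ∈ F_q^*`. If `𝓔 ⊆ F_q^d` has size at least `(31 + 10·C(k,2))·q^(d/2)`,
then `𝓔` contains a pair of `k`-stars with dilation ratio `r`. -/
theorem stars_even_dim {F : Type*} [Field F] [Fintype F]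
    (hodd : Odd (Fintype.card F)) (hq5 : 5 ≤ Fintype.card F)
    {d : ℕ} (hd2 : 2 ≤ d) (hdeven : Even d)
    {k : ℕ} (hk : 2 ≤ k)
    {r : F} (hr : r ≠ 0)
    (𝓔 : Finset (Fin d → F))
    (hcard : (31 + 10 * (k.choose 2 : ℝ)) * (Fintype.card F : ℝ) ^ ((d : ℝ) / 2)
      ≤ (𝓔.card : ℝ)) :
    ContainsPairOfStars 𝓔 k r := by
  classical
  have hF : ringChar F ≠ 2 := fun h => by
    have := FiniteField.even_card_iff_char_two.1 h
    have := Nat.odd_iff.1 hodd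
    omega
  obtain ⟨m, hm⟩ := hdeven.two_dvd
  have hm1 : m ≠ 0 := by omega
  have hpow : (Fintype.card F : ℝ) ^ ((d : ℝ) / 2) = (Fintype.card F : ℝ) ^ m := by
    rw [hm, ← Real.rpow_natCast]; congr 1; push_cast; ring
  have hqpos : (5 : ℝ) ≤ Fintype.card F := by exact_mod_cast hq5
  have hqm : (Fintype.card F : ℝ) ≤ (Fintype.card F : ℝ) ^ m := le_self_pow₀ (by linarith) hm1
  have hk' : (2 : ℝ) ≤ k := by exact_mod_cast hk
  rw [hpow, Nat.cast_choose_two] at hcard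
  have hC : 41 ≤ 31 + 10 * ((k : ℝ) * (k - 1) / 2) := by nlinarith
  have hE : 41 * (Fintype.card F : ℝ) ^ m ≤ 𝓔.card :=
    (mul_le_mul_of_nonneg_right hC (by positivity)).trans hcard
  have hE' : (31 + 10 * ((k : ℝ) * (k - 1) / 2)) * Fintype.card F ≤ 𝓔.card :=
    (mul_le_mul_of_nonneg_left hqm (by linarith)).trans hcard
  have hbound := energy_bound hF hm hr hq5 𝓔 hE _ rfl
  rw [energy_eq hr 𝓔 _ rfl] at hbound
  by_contra hcon
  have hfib : ∀ x ∈ 𝓔, ∀ y ∈ 𝓔, (((𝓔 ×ˢ 𝓔).filter fun p =>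
      norm2 (p.2 - y) = r * norm2 (p.1 - x) ∧ r * norm2 (p.1 - x) ≠ 0).card : ℝ)
      ≤ (k - 1) * (𝓔.card + 𝓔.card) := by
    intro x hx y hy
    have := not_lt.1 fun h => hcon (exists_star_of_card hx hy h)
    have h2 := (Nat.cast_le (α := ℝ)).2 this
    push_cast [Nat.cast_sub (by omega : 1 ≤ k)] at h2
    exact h2
  have hsum := Finset.sum_le_sum fun x hx => Finset.sum_le_sum fun y hy => hfib x hx y hy
  simp only [Finset.sum_const, nsmul_eq_mul] at hsum
  generalize (Fintype.card F : ℝ) = q at *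
  generalize (𝓔.card : ℝ) = n at *
  have hn : 0 < n := by nlinarith
  have h1 := hbound.trans (mul_le_mul_of_nonneg_left hsum (by linarith))
  have h2 : n ≤ 4 * q * (k - 1) := by
    refine le_of_mul_le_mul_left ?_ (by positivity : 0 < n ^ 3)
    linarith
  nlinarith
end

section
/- Let q be an odd prime power, let d ≥ 3 be odd, let k ≥ 2 be an integer, and let r ∈ F_q^+ (a nonzero quadratic residue). If 𝓔 ⊆ F_q^d has size at least (4 + √3·C(k,2))·q^(d/2) (where C(k,2) = k(k−1)/2), then 𝓔 contains a pair of k-stars with dilation ratio r. -/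
/-! ### Gauss sums and the number of isotropic differences -/

/-- The quadratic character of `F`, with complex values. -/
noncomputable def quadCharC (F : Type*) [Field F] [Fintype F] [DecidableEq F] : MulChar F ℂ :=
  (quadraticChar F).ringHomComp (Int.castRingHom ℂ)

/-- The quadratic Gauss sum of `F` for the standard primitive additive character. -/
noncomputable def quadGauss (F : Type*) [Field F] [Fintype F] [DecidableEq F] : ℂ :=
  gaussSum (quadCharC F) (AddChar.FiniteField.primitiveChar_to_Complex F)

lemma quadCharC_ne_one {F : Type*} [Field F] [Fintype F] [DecidableEq F]
    (h2 : ringChar F ≠ 2) : quadCharC F ≠ 1 := by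
  obtain ⟨a, ha⟩ := quadraticChar_exists_neg_one' h2
  intro h
  have h1 := congrArg (fun χ : MulChar F ℂ => χ (a : F)) h
  simp only [quadCharC, MulChar.ringHomComp_apply, ha, MulChar.one_apply_coe] at h1
  norm_num at h1

lemma quadCharC_sq {F : Type*} [Field F] [Fintype F] [DecidableEq F]
    {a : F} (ha : a ≠ 0) : quadCharC F a ^ 2 = 1 := by
  have := quadraticChar_sq_one ha
  simp only [quadCharC, MulChar.ringHomComp_apply]
  rw [← map_pow, this]; simp

lemma norm_quadCharC_le {F : Type*} [Field F] [Fintype F] [DecidableEq F]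
    (a : F) : ‖quadCharC F a‖ ≤ 1 := by
  by_cases ha : a = 0
  · subst ha; simp [MulChar.map_zero]
  · have := congrArg norm (quadCharC_sq ha)
    rw [norm_pow, norm_one] at this
    nlinarith [norm_nonneg (quadCharC F a)]

lemma norm_quadGauss_sq {F : Type*} [Field F] [Fintype F] [DecidableEq F]
    (h2 : ringChar F ≠ 2) : ‖quadGauss F‖ ^ 2 = Fintype.card F := by
  have h := gaussSum_sq (quadCharC_ne_one h2) ((quadraticChar_isQuadratic F).comp _)
    (AddChar.FiniteField.primitiveChar_to_Complex_isPrimitive F)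
  have h3 := congrArg norm h
  have h1 := congrArg norm (quadCharC_sq (F := F) (a := -1) (by simp))
  have h4 : ‖quadCharC F (-1)‖ = 1 := by
    rw [norm_pow, norm_one] at h1
    nlinarith [norm_nonneg (quadCharC F (-1))]
  rw [norm_pow, norm_mul, h4] at h3
  simpa [quadGauss] using h3

lemma sum_comp_sq {F : Type*} [Field F] [Fintype F] [DecidableEq F]
    (h2 : ringChar F ≠ 2) (f : F → ℂ) :
    ∑ x, f (x ^ 2) = ∑ t, (1 + quadCharC F t) * f t := by
  rw [← Finset.sum_fiberwise (s := Finset.univ) (g := fun x : F => x ^ 2)]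
  refine Finset.sum_congr rfl fun t _ => ?_
  have h1 : ∑ x with x ^ 2 = t, f (x ^ 2) = ∑ x with x ^ 2 = t, f t :=
    Finset.sum_congr rfl fun x hx => by rw [(Finset.mem_filter.1 hx).2]
  rw [h1, Finset.sum_const, nsmul_eq_mul]
  have h3 := quadraticChar_card_sqrts h2 t
  have h4 : ({x : F | x ^ 2 = t} : Set F).toFinset = Finset.univ.filter (fun x => x ^ 2 = t) := by
    ext x; simp
  rw [h4] at h3
  have h5 := congrArg (fun z : ℤ => (z : ℂ)) h3
  simp only [Int.cast_natCast, Int.cast_add, Int.cast_one] at h5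
  rw [h5, add_comm]
  simp [quadCharC, MulChar.ringHomComp_apply]

lemma sum_quadCharC_mul {F : Type*} [Field F] [Fintype F] [DecidableEq F]
    (h2 : ringChar F ≠ 2) (n : F) :
    ∑ s, quadCharC F s * AddChar.FiniteField.primitiveChar_to_Complex F (s * n)
      = quadCharC F n * quadGauss F := by
  by_cases hn : n = 0
  · subst hn
    simp [MulChar.sum_eq_zero_of_ne_one (quadCharC_ne_one h2), MulChar.map_zero]
  · have h := gaussSum_mulShift (quadCharC F)
      (AddChar.FiniteField.primitiveChar_to_Complex F) (Units.mk0 n hn)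
    rw [Units.val_mk0] at h
    rw [quadGauss, ← h, ← mul_assoc, ← sq, quadCharC_sq hn, one_mul, gaussSum]
    simp [AddChar.mulShift_apply, mul_comm]

/-- Completing the square evaluates a one-dimensional quadratic exponential sum. -/
lemma sum_quadratic {F : Type*} [Field F] [Fintype F] [DecidableEq F]
    (h2 : ringChar F ≠ 2) {a : F} (ha : a ≠ 0) (b : F) :
    ∑ x, AddChar.FiniteField.primitiveChar_to_Complex F (a * x ^ 2 + b * x)
      = quadCharC F a * quadGauss F *
        AddChar.FiniteField.primitiveChar_to_Complex F (b ^ 2 * (-(4 * a)⁻¹)) := by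
  set ψ := AddChar.FiniteField.primitiveChar_to_Complex F with hψ
  have h20 : (2 : F) ≠ 0 := Ring.two_ne_zero h2
  have h40 : (4 : F) ≠ 0 := by
    have : (4 : F) = 2 * 2 := by norm_num
    rw [this]; exact mul_ne_zero h20 h20
  have e1 : ∀ x : F, ψ (a * x ^ 2 + b * x) =
      ψ (a * (x + b / (2 * a)) ^ 2) * ψ (b ^ 2 * (-(4 * a)⁻¹)) := by
    intro x
    rw [← AddChar.map_add_eq_mul]
    congr 1
    field_simp
    ring
  simp_rw [e1]
  rw [← Finset.sum_mul]
  congr 1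
  have e2 : ∑ x, ψ (a * (x + b / (2 * a)) ^ 2) = ∑ x, ψ (a * x ^ 2) :=
    _root_.Equiv.sum_comp (Equiv.addRight (b / (2 * a))) (fun x => ψ (a * x ^ 2))
  rw [e2, sum_comp_sq h2 (fun t => ψ (a * t))]
  simp_rw [add_mul, one_mul]
  rw [Finset.sum_add_distrib]
  have e3 : ∑ x, ψ (a * x) = 0 := by
    have := AddChar.sum_mulShift a (AddChar.FiniteField.primitiveChar_to_Complex_isPrimitive F)
    simp_rw [mul_comm a]
    rw [this]; simp [ha]
  rw [e3, zero_add]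
  simp_rw [mul_comm a]
  exact sum_quadCharC_mul h2 a

lemma addChar_map_sum {F : Type*} [Field F] {d : ℕ} (ψ : AddChar F ℂ) (f : Fin d → F) :
    ψ (∑ i, f i) = ∏ i, ψ (f i) := by
  have h := map_prod ψ.toMonoidHom (fun i => Multiplicative.ofAdd (f i)) Finset.univ
  simpa [← ofAdd_sum] using h

/-- The Fourier transform of `ξ ↦ ψ (a‖ξ‖)` on `F ^ d`. -/
lemma sum_quadratic_vec {F : Type*} [Field F] [Fintype F] [DecidableEq F] {d : ℕ}
    (h2 : ringChar F ≠ 2) {a : F} (ha : a ≠ 0) (v : Fin d → F) :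
    ∑ ξ : Fin d → F, AddChar.FiniteField.primitiveChar_to_Complex F (a * norm2 ξ + v ⬝ᵥ ξ)
      = (quadCharC F a * quadGauss F) ^ d *
        AddChar.FiniteField.primitiveChar_to_Complex F (norm2 v * (-(4 * a)⁻¹)) := by
  have e : ∀ ξ : Fin d → F, a * norm2 ξ + v ⬝ᵥ ξ = ∑ i, (a * ξ i ^ 2 + v i * ξ i) := by
    intro ξ
    simp [norm2, dotProduct, Finset.sum_add_distrib, Finset.mul_sum]
  simp_rw [e, addChar_map_sum]
  rw [← Fintype.prod_sum (fun (i : Fin d) (x : F) =>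
    AddChar.FiniteField.primitiveChar_to_Complex F (a * x ^ 2 + v i * x))]
  simp_rw [sum_quadratic h2 ha]
  rw [Finset.prod_mul_distrib, ← addChar_map_sum, ← Finset.sum_mul]
  simp [norm2]

/-- `|Ê(ξ)|² = ∑_{x,y ∈ E} ψ ((x - y)·ξ)` for the Fourier transform `Ê` of the indicator of `E`. -/
lemma normSq_fourier {F : Type*} [Field F] [Fintype F] {d : ℕ}
    (E : Finset (Fin d → F)) (ξ : Fin d → F) :
    ((‖∑ x ∈ E, AddChar.FiniteField.primitiveChar_to_Complex F (x ⬝ᵥ ξ)‖ ^ 2 : ℝ) : ℂ)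
      = ∑ x ∈ E, ∑ y ∈ E, AddChar.FiniteField.primitiveChar_to_Complex F ((x - y) ⬝ᵥ ξ) := by
  rw [Complex.ofReal_pow, ← Complex.mul_conj', map_sum, Finset.sum_mul_sum]
  refine Finset.sum_congr rfl fun x _ => Finset.sum_congr rfl fun y _ => ?_
  rw [← AddChar.map_neg_eq_conj, ← AddChar.map_add_eq_mul, sub_dotProduct, sub_eq_add_neg]

lemma sum_addChar_dotProduct {F : Type*} [Field F] [Fintype F] [DecidableEq F] {d : ℕ}
    (v : Fin d → F) :
    ∑ ξ : Fin d → F, AddChar.FiniteField.primitiveChar_to_Complex F (v ⬝ᵥ ξ)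
      = if v = 0 then (Fintype.card F : ℂ) ^ d else 0 := by
  simp_rw [dotProduct, addChar_map_sum]
  rw [← Fintype.prod_sum (fun (i : Fin d) (x : F) =>
    AddChar.FiniteField.primitiveChar_to_Complex F (v i * x))]
  have h : ∀ i, ∑ x, AddChar.FiniteField.primitiveChar_to_Complex F (v i * x)
      = if v i = 0 then (Fintype.card F : ℂ) else 0 := by
    intro i
    have := AddChar.sum_mulShift (v i)
      (AddChar.FiniteField.primitiveChar_to_Complex_isPrimitive F)
    simp_rw [mul_comm (v i)]
    rw [this]; split_ifs <;> simp
  simp_rw [h]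
  split_ifs with hv
  · subst hv; simp
  · obtain ⟨i, hi⟩ := Function.ne_iff.1 hv
    exact Finset.prod_eq_zero (Finset.mem_univ i) (if_neg hi)

/-- Parseval's identity for the indicator function of a finite set. -/
lemma parseval {F : Type*} [Field F] [Fintype F] [DecidableEq F] {d : ℕ}
    (E : Finset (Fin d → F)) :
    ∑ ξ : Fin d → F, ‖∑ x ∈ E, AddChar.FiniteField.primitiveChar_to_Complex F (x ⬝ᵥ ξ)‖ ^ 2
      = (Fintype.card F : ℝ) ^ d * E.card := by
  apply Complex.ofReal_injective
  rw [Complex.ofReal_sum]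
  simp_rw [normSq_fourier]
  rw [Finset.sum_comm]
  simp_rw [Finset.sum_comm (s := Finset.univ) (t := E), sum_addChar_dotProduct, sub_eq_zero]
  simp [mul_comm]

lemma sum_erase_inv {F : Type*} [Field F] [Fintype F] [DecidableEq F]
    (h2 : ringChar F ≠ 2) (n : F) :
    ∑ a ∈ Finset.univ.erase (0 : F),
        AddChar.FiniteField.primitiveChar_to_Complex F (n * (-(4 * a)⁻¹))
      = (Fintype.card F : ℂ) * (if n = 0 then 1 else 0) - 1 := by
  have h20 : (2 : F) ≠ 0 := Ring.two_ne_zero h2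
  have h40 : (4 : F) ≠ 0 := by
    have : (4 : F) = 2 * 2 := by norm_num
    rw [this]; exact mul_ne_zero h20 h20
  have h1 : ∑ a ∈ Finset.univ.erase (0 : F),
        AddChar.FiniteField.primitiveChar_to_Complex F (n * (-(4 * a)⁻¹))
      = ∑ b ∈ Finset.univ.erase (0 : F),
        AddChar.FiniteField.primitiveChar_to_Complex F (b * n) := by
    refine Finset.sum_nbij' (fun a => -(4 * a)⁻¹) (fun b => -(4 * b)⁻¹) ?_ ?_ ?_ ?_ ?_
    · intro a ha; simp_all
    · intro a ha; simp_all
    · intro a ha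
      have : a ≠ 0 := by simpa using ha
      field_simp
    · intro a ha
      have : a ≠ 0 := by simpa using ha
      field_simp
    · intro a ha; rw [mul_comm]
  rw [h1, Finset.sum_erase_eq_sub (Finset.mem_univ _),
    AddChar.sum_mulShift n (AddChar.FiniteField.primitiveChar_to_Complex_isPrimitive F)]
  simp

/-- In odd dimension the quadratic characters coming from the `d`-fold Gauss sum cancel to a
single one, so the isotropic pairs in `E` are equidistributed up to a twisted `L²` sum of the
Fourier transform of `E`. -/
lemma isotropic_identity {F : Type*} [Field F] [Fintype F] [DecidableEq F] {e : ℕ}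
    (h2 : ringChar F ≠ 2) (E : Finset (Fin (2 * e + 1) → F)) :
    quadGauss F ^ (2 * e + 1) * ((Fintype.card F : ℂ) *
        ((E ×ˢ E).filter fun p => norm2 (p.1 - p.2) = 0).card - (E.card : ℂ) ^ 2)
      = quadGauss F * ∑ ξ : Fin (2 * e + 1) → F, quadCharC F (norm2 ξ) *
        ((‖∑ x ∈ E, AddChar.FiniteField.primitiveChar_to_Complex F (x ⬝ᵥ ξ)‖ ^ 2 : ℝ) : ℂ) := by
  set ψ := AddChar.FiniteField.primitiveChar_to_Complex F with hψ
  have hL : ∀ a ∈ Finset.univ.erase (0 : F),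
      quadCharC F a * ∑ ξ : Fin (2 * e + 1) → F, ψ (a * norm2 ξ) *
        ((‖∑ x ∈ E, ψ (x ⬝ᵥ ξ)‖ ^ 2 : ℝ) : ℂ)
      = quadGauss F ^ (2 * e + 1) * ∑ x ∈ E, ∑ y ∈ E, ψ (norm2 (x - y) * (-(4 * a)⁻¹)) := by
    intro a ha
    have ha0 : a ≠ 0 := by simpa using ha
    simp_rw [hψ, normSq_fourier, Finset.mul_sum, ← AddChar.map_add_eq_mul]
    rw [Finset.sum_comm]
    refine Finset.sum_congr rfl fun x _ => ?_
    rw [Finset.sum_comm]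
    refine Finset.sum_congr rfl fun y _ => ?_
    rw [← Finset.mul_sum, sum_quadratic_vec h2 ha0]
    have := quadCharC_sq ha0
    rw [mul_pow, ← mul_assoc, ← mul_assoc, ← pow_succ',
      show 2 * e + 1 + 1 = 2 * (e + 1) by ring, pow_mul, this, one_pow, one_mul]
  have hS := Finset.sum_congr rfl hL
  rw [← Finset.mul_sum, Finset.sum_comm] at hS
  have hA : ∑ x ∈ E, ∑ a ∈ Finset.univ.erase (0 : F), ∑ y ∈ E,
        ψ (norm2 (x - y) * (-(4 * a)⁻¹))
      = (Fintype.card F : ℂ) *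
        ((E ×ˢ E).filter fun p => norm2 (p.1 - p.2) = 0).card - (E.card : ℂ) ^ 2 := by
    simp_rw [Finset.sum_comm (s := Finset.univ.erase (0 : F)) (t := E), hψ, sum_erase_inv h2,
      Finset.sum_sub_distrib, ← Finset.mul_sum]
    rw [Finset.card_filter, Finset.sum_product]
    push_cast
    simp [sq]
  rw [hA] at hS
  rw [← hS]
  simp_rw [Finset.mul_sum]
  rw [Finset.sum_comm]
  refine Finset.sum_congr rfl fun ξ _ => ?_
  have h3 := sum_quadCharC_mul h2 (norm2 ξ)
  rw [← mul_assoc, mul_comm (quadGauss F), ← h3, Finset.sum_mul,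
    ← Finset.sum_erase (a := (0 : F)) Finset.univ (by simp [MulChar.map_zero])]
  refine Finset.sum_congr rfl fun a _ => by ring

/-- `N₀ ≤ m² / q + q ^ ((d - 1) / 2) m` for the number `N₀` of ordered pairs in `E` with isotropic
difference, where `m = |E|` and `d = 2 e + 1`. -/
lemma isotropic_le {F : Type*} [Field F] [Fintype F] [DecidableEq F] {e : ℕ}
    (h2 : ringChar F ≠ 2) (E : Finset (Fin (2 * e + 1) → F)) :
    (Fintype.card F : ℝ) * ((E ×ˢ E).filter fun p => norm2 (p.1 - p.2) = 0).card
      ≤ (E.card : ℝ) ^ 2 + (Fintype.card F : ℝ) ^ (e + 1) * E.card := by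
  set q := (Fintype.card F : ℝ) with hq
  have hq0 : 0 < q := by rw [hq]; exact_mod_cast Fintype.card_pos
  set N := (((E ×ˢ E).filter fun p => norm2 (p.1 - p.2) = 0).card : ℝ) with hN
  have hg := norm_quadGauss_sq (F := F) h2
  have hg0 : 0 < ‖quadGauss F‖ := by
    rcases (norm_nonneg (quadGauss F)).lt_or_eq with h | h
    · exact h
    · rw [← h, zero_pow two_ne_zero] at hg
      exact absurd hg hq0.ne
  have h1 := congrArg norm (isotropic_identity h2 E)
  rw [norm_mul, norm_mul, norm_pow, pow_succ, pow_mul, hg, mul_comm (_ ^ e) ‖quadGauss F‖,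
    mul_assoc] at h1
  have h3 := mul_left_cancel₀ hg0.ne' h1
  have h4 : ‖∑ ξ : Fin (2 * e + 1) → F, quadCharC F (norm2 ξ) *
        ((‖∑ x ∈ E, AddChar.FiniteField.primitiveChar_to_Complex F (x ⬝ᵥ ξ)‖ ^ 2 : ℝ) : ℂ)‖
      ≤ q ^ (2 * e + 1) * E.card := by
    rw [← parseval]
    refine norm_sum_le_of_le _ fun ξ _ => ?_
    rw [norm_mul, Complex.norm_real, Real.norm_of_nonneg (by positivity)]
    exact mul_le_of_le_one_left (by positivity) (norm_quadCharC_le _)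
  have h5 : ‖((Fintype.card F : ℂ) *
        ((E ×ˢ E).filter fun p => norm2 (p.1 - p.2) = 0).card - (E.card : ℂ) ^ 2)‖
      = |q * N - (E.card : ℝ) ^ 2| := by
    rw [← Real.norm_eq_abs, ← Complex.norm_real]
    push_cast [hq, hN]
    rfl
  rw [h5, ← hq] at h3
  have h6 : q ^ e * |q * N - (E.card : ℝ) ^ 2| ≤ q ^ e * (q ^ (e + 1) * E.card) := by
    rw [h3]
    refine h4.trans (le_of_eq ?_)
    ring
  have h7 := le_of_mul_le_mul_left h6 (by positivity)
  linarith [le_abs_self (q * N - (E.card : ℝ) ^ 2)]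

/-! ### Isometries moving isotropic vectors -/

lemma norm2_eq_dotProduct {F : Type*} [Field F] {d : ℕ} (v : Fin d → F) :
    norm2 v = v ⬝ᵥ v := by
  simp [norm2, dotProduct, sq]

lemma norm2_smul {F : Type*} [Field F] {d : ℕ} (s : F) (v : Fin d → F) :
    norm2 (s • v) = s ^ 2 * norm2 v := by
  simp [norm2, Finset.mul_sum, mul_pow]

/-- The orthogonal group of the quadratic form `norm2`, as a subgroup of the linear
automorphisms of `F ^ d`. -/
def isoGroup (F : Type*) [Field F] (d : ℕ) : Subgroup ((Fin d → F) ≃ₗ[F] (Fin d → F)) where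
  carrier := {g | ∀ v, norm2 (g v) = norm2 v}
  mul_mem' := by
    intro _ _ ha hb v
    rw [LinearEquiv.mul_apply, ha, hb]
  one_mem' := fun v => rfl
  inv_mem' := by
    intro a ha v
    have := ha (a⁻¹ v)
    rw [← this]
    congr 1
    exact a.apply_symm_apply v

instance {F : Type*} [Field F] [Finite F] {d : ℕ} : Finite (isoGroup F d) :=
  Finite.of_injective (fun g : isoGroup F d => (fun v => g.1 v : (Fin d → F) → (Fin d → F)))
    (fun _ _ h => Subtype.ext (LinearEquiv.ext fun v => congrFun h v))

/-- Two isotropic vectors that are not orthogonal are exchanged by the reflection in their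
difference. -/
lemma exists_isometry {F : Type*} [Field F] {d : ℕ} (h2 : (2 : F) ≠ 0) {w b : Fin d → F}
    (hw : norm2 w = 0) (hb : norm2 b = 0) (hwb : b ⬝ᵥ w ≠ 0) :
    ∃ g : isoGroup F d, g.1 w = b := by
  rw [norm2_eq_dotProduct] at hw hb
  set u := w - b with hu
  have huu : u ⬝ᵥ u = -(2 * (b ⬝ᵥ w)) := by
    simp only [hu, sub_dotProduct, dotProduct_sub, hw, hb, dotProduct_comm w b]; ring
  have huu0 : u ⬝ᵥ u ≠ 0 := by
    rw [huu]; exact neg_ne_zero.2 (mul_ne_zero h2 hwb)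
  let f : Module.Dual F (Fin d → F) :=
    { toFun := fun v => 2 / (u ⬝ᵥ u) * (u ⬝ᵥ v)
      map_add' := fun x y => by rw [dotProduct_add, mul_add]
      map_smul' := fun c x => by
        rw [dotProduct_smul, smul_eq_mul, RingHom.id_apply, smul_eq_mul]; ring }
  have hf : ∀ v, f v = 2 / (u ⬝ᵥ u) * (u ⬝ᵥ v) := fun v => rfl
  have hfu : f u = 2 := by rw [hf]; field_simp
  refine ⟨⟨Module.reflection hfu, fun v => ?_⟩, ?_⟩
  · rw [Module.reflection_apply, norm2_eq_dotProduct, norm2_eq_dotProduct, hf]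
    simp only [sub_dotProduct, dotProduct_sub, smul_dotProduct, dotProduct_smul, smul_eq_mul,
      dotProduct_comm v u]
    field_simp
    ring
  · change Module.reflection hfu w = b
    have h1 : f w = 1 := by
      rw [hf, huu]
      simp only [hu, sub_dotProduct, hw]
      field_simp
      ring
    rw [Module.reflection_apply, h1, one_smul, hu, sub_sub_cancel]

/-- Adding multiples of an isotropic vector `w` moves each vector not orthogonal to `w` to exactly
one isotropic vector, which gives a lower bound for the number of isotropic vectors not
orthogonal to `w`. -/
lemma card_isotropic_not_orthogonal {F : Type*} [Field F] [Fintype F] [DecidableEq F] {d : ℕ}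
    (h2 : (2 : F) ≠ 0) {w : Fin d → F} (hw : norm2 w = 0) (hw0 : w ≠ 0) :
    Fintype.card F ^ (d + 1) ≤ Fintype.card F ^ 2 *
      (Finset.univ.filter fun b : Fin d → F => norm2 b = 0 ∧ b ⬝ᵥ w ≠ 0).card
      + Fintype.card F ^ d := by
  set q := Fintype.card F
  set B := Finset.univ.filter fun b : Fin d → F => norm2 b = 0 ∧ b ⬝ᵥ w ≠ 0
  set K := Finset.univ.filter fun b : Fin d → F => b ⬝ᵥ w = 0
  set K' := Finset.univ.filter fun b : Fin d → F => ¬ (b ⬝ᵥ w = 0)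
  have hV : Fintype.card (Fin d → F) = q ^ d := by simp [q]
  have hKK : K.card + K'.card = q ^ d := by
    rw [← hV]; exact Finset.card_filter_add_card_filter_not _
  have hww : w ⬝ᵥ w = 0 := by rwa [norm2_eq_dotProduct] at hw
  have hK : q * K.card ≤ q ^ d := by
    obtain ⟨i, hi⟩ := Function.ne_iff.1 hw0
    rw [Pi.zero_apply] at hi
    have hv0 : (Pi.single i 1 : Fin d → F) ⬝ᵥ w = w i := by simp
    have := Finset.card_le_card_of_injOn (s := (Finset.univ : Finset F) ×ˢ K)
      (t := (Finset.univ : Finset (Fin d → F)))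
      (fun p => p.2 + p.1 • (Pi.single i 1 : Fin d → F)) (by intro _ _; simp) (by
        rintro ⟨c, v⟩ hp ⟨c', v'⟩ hp' h
        have hv : v ⬝ᵥ w = 0 := by simpa [K] using hp
        have hv' : v' ⬝ᵥ w = 0 := by simpa [K] using hp'
        simp only at h
        have h1 := congrArg (fun z => z ⬝ᵥ w) h
        simp only [add_dotProduct, smul_dotProduct, hv, hv', hv0, zero_add, smul_eq_mul] at h1
        have hc : c = c' := mul_right_cancel₀ hi h1
        subst hc
        rw [add_right_cancel h])
    rw [Finset.card_product, Finset.card_univ, Finset.card_univ, hV] at this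
    exact this
  have hB : K'.card ≤ q * B.card := by
    have := Finset.card_le_card_of_surjOn (s := (Finset.univ : Finset F) ×ˢ B) (t := K')
      (fun p => p.2 + p.1 • w) (by
        intro v hv
        have hv : v ⬝ᵥ w ≠ 0 := by simpa [K'] using hv
        refine ⟨(norm2 v / (2 * (v ⬝ᵥ w)), v - (norm2 v / (2 * (v ⬝ᵥ w))) • w), ?_, ?_⟩
        · simp only [B, Finset.coe_product, Set.mem_prod, Finset.coe_univ, Set.mem_univ, true_and,
            Finset.coe_filter, Finset.mem_univ, Set.mem_ofPred_eq]
          constructor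
          · rw [norm2_eq_dotProduct, norm2_eq_dotProduct]
            simp only [sub_dotProduct, dotProduct_sub, smul_dotProduct, dotProduct_smul,
              smul_eq_mul, dotProduct_comm w v, hww]
            field_simp
            ring
          · simpa [sub_dotProduct, smul_dotProduct, hww] using hv
        · simp)
    rw [Finset.card_product, Finset.card_univ] at this
    exact this
  calc q ^ (d + 1) = q * K'.card + q * K.card := by rw [pow_succ, ← hKK]; ring
    _ ≤ q * (q * B.card) + q ^ d := add_le_add (Nat.mul_le_mul_left _ hB) hK
    _ = _ := by ring

/-- Few isometries send a given isotropic vector `w` to a prescribed vector, because the orbit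
of `w` contains every isotropic vector not orthogonal to `w`. -/
lemma card_isometry_apply_eq {F : Type*} [Field F] [Fintype F] [DecidableEq F] {d : ℕ}
    [Fintype (isoGroup F d)]
    (h2 : (2 : F) ≠ 0) {w : Fin d → F} (hw : norm2 w = 0) (hw0 : w ≠ 0) (w' : Fin d → F) :
    (Fintype.card F : ℝ) ^ d * (Fintype.card F - 1) *
      (Finset.univ.filter fun g : isoGroup F d => g.1 w = w').card
      ≤ (Fintype.card F : ℝ) ^ 2 * Fintype.card (isoGroup F d) := by
  classical
  set B := Finset.univ.filter fun b : Fin d → F => norm2 b = 0 ∧ b ⬝ᵥ w ≠ 0 with hBdef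
  set S := Finset.univ.filter fun g : isoGroup F d => g.1 w = w' with hS
  have hB := card_isotropic_not_orthogonal h2 hw hw0
  rw [← hBdef] at hB
  have hSB : B.card * S.card ≤ Fintype.card (isoGroup F d) := by
    rcases S.eq_empty_or_nonempty with h | ⟨g₀, hg₀⟩
    · rw [h]; simp
    · have hg₀' : g₀.1 w = w' := by simpa [hS] using hg₀
      have hex : ∀ b : Fin d → F, ∃ g : isoGroup F d, b ∈ B → g.1 w = b := by
        intro b
        by_cases hb : b ∈ B
        · have hb' : norm2 b = 0 ∧ b ⬝ᵥ w ≠ 0 := by simpa [hBdef] using hb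
          obtain ⟨g, hg⟩ := exists_isometry h2 hw hb'.1 hb'.2
          exact ⟨g, fun _ => hg⟩
        · exact ⟨1, fun h => absurd h hb⟩
      choose h hh using hex
      rw [← Finset.card_product, ← Finset.card_univ]
      have key : ∀ b ∈ B, ∀ g ∈ S, (h b * g₀⁻¹ * g).1 w = b := by
        intro b hb g hg
        have hg' : g.1 w = w' := by simpa [hS] using hg
        have e : g₀.1⁻¹ w' = w := by
          rw [← hg₀']; exact g₀.1.symm_apply_apply w
        change (h b).1 (g₀.1⁻¹ (g.1 w)) = b
        rw [hg', e, hh b hb]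
      refine Finset.card_le_card_of_injOn (fun p => h p.1 * g₀⁻¹ * p.2)
        (by intro _ _; simp) ?_
      rintro ⟨b, g⟩ hp ⟨b', g'⟩ hp' heq
      obtain ⟨hb, hg⟩ := Finset.mem_product.1 (Finset.mem_coe.1 hp)
      obtain ⟨hb', hg'⟩ := Finset.mem_product.1 (Finset.mem_coe.1 hp')
      simp only at heq hb hg hb' hg'
      have h1 := key b hb g hg
      rw [heq, key b' hb' g' hg'] at h1
      subst h1
      rw [mul_left_cancel heq]
  have hB' : (Fintype.card F : ℝ) ^ (d + 1) ≤ (Fintype.card F : ℝ) ^ 2 * B.card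
      + (Fintype.card F : ℝ) ^ d := by exact_mod_cast hB
  have hSB' : (B.card : ℝ) * S.card ≤ Fintype.card (isoGroup F d) := by exact_mod_cast hSB
  calc (Fintype.card F : ℝ) ^ d * (Fintype.card F - 1) * S.card
      ≤ ((Fintype.card F : ℝ) ^ 2 * B.card) * S.card := by
        refine mul_le_mul_of_nonneg_right ?_ (by positivity)
        rw [pow_succ] at hB'; linarith
    _ ≤ _ := by
        rw [mul_assoc]
        exact mul_le_mul_of_nonneg_left hSB' (by positivity)

/-! ### Stars in the overlap of `𝓔` with a similar copy -/

/-- The points `x ∈ E` whose image under the similarity `x ↦ s g x + z` lies in `E`. -/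
def overlap {F : Type*} [Field F] [DecidableEq F] {d : ℕ} (E : Finset (Fin d → F)) (s : F)
    (g : (Fin d → F) ≃ₗ[F] (Fin d → F)) (z : Fin d → F) : Finset (Fin d → F) :=
  E.filter fun x => s • g x + z ∈ E

/-- The ordered pairs of distinct points of `E` with isotropic difference. -/
def isoPairs {F : Type*} [Field F] [DecidableEq F] {d : ℕ} (E : Finset (Fin d → F)) :
    Finset ((Fin d → F) × (Fin d → F)) :=
  (E ×ˢ E).filter fun p => norm2 (p.1 - p.2) = 0 ∧ p.1 ≠ p.2

/-- A point of the overlap with `k` non-isotropic differences inside the overlap is the centre of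
a `k`-star whose image under the similarity is a second, `r`-dilated, star. -/
lemma star_of_overlap {F : Type*} [Field F] [DecidableEq F] {d : ℕ} {E : Finset (Fin d → F)}
    {s : F} (hs : s ≠ 0) (g : isoGroup F d) (z : Fin d → F) {k : ℕ} {x₀ : Fin d → F}
    (hx₀ : x₀ ∈ overlap E s g.1 z)
    (hk : k ≤ ((overlap E s g.1 z).filter fun x => norm2 (x₀ - x) ≠ 0).card) :
    ContainsPairOfStars E k (s * s) := by
  obtain ⟨T, hT, hTk⟩ := Finset.exists_subset_card_eq hk
  let f : Fin k ≃ T := (Finset.equivFinOfCardEq hTk).symm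
  have hf : ∀ i, (f i : Fin d → F) ∈ overlap E s g.1 z ∧ norm2 (x₀ - (f i : Fin d → F)) ≠ 0 :=
    fun i => Finset.mem_filter.1 (hT (f i).2)
  have hmem : ∀ x ∈ overlap E s g.1 z, x ∈ E ∧ s • g.1 x + z ∈ E := fun x hx =>
    Finset.mem_filter.1 hx
  set x : Fin (k + 1) → (Fin d → F) := Fin.cons x₀ (fun i => (f i : Fin d → F)) with hx
  have hxo : ∀ i, x i ∈ overlap E s g.1 z := by
    intro i
    refine Fin.cases ?_ (fun j => ?_) i
    · simpa [hx] using hx₀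
    · simpa [hx] using (hf j).1
  have hinj : Function.Injective x := by
    rw [hx, Fin.cons_injective_iff]
    refine ⟨?_, fun i j h => f.injective (Subtype.ext h)⟩
    rintro ⟨i, hi⟩
    apply (hf i).2
    rw [show (f i : Fin d → F) = x₀ from hi, sub_self]
    simp [norm2]
  refine ⟨x, fun i => s • g.1 (x i) + z, hinj, ?_, fun i => (hmem _ (hxo i)).1,
    fun i => (hmem _ (hxo i)).2, ?_⟩
  · intro i j h
    have h1 := smul_right_injective _ hs (add_right_cancel h)
    exact hinj (g.1.injective h1)
  · intro i hi
    obtain ⟨j, rfl⟩ := Fin.exists_succ_eq.2 hi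
    have e : s • g.1 (x j.succ) + z - (s • g.1 (x 0) + z) = s • g.1 (x j.succ - x 0) := by
      rw [map_sub, smul_sub]; abel
    refine ⟨?_, ?_⟩
    · simp only [e]
      rw [norm2_smul, g.2, sq]
    · refine mul_ne_zero (mul_ne_zero hs hs) ?_
      have := (hf j).2
      rw [norm2_eq_dotProduct] at this ⊢
      have e2 : x j.succ - x 0 = -(x₀ - (f j : Fin d → F)) := by simp [hx]
      rwa [e2, neg_dotProduct_neg]

lemma sum_card_overlap {F : Type*} [Field F] [Fintype F] [DecidableEq F] {d : ℕ}
    (E : Finset (Fin d → F)) (s : F) (g : (Fin d → F) ≃ₗ[F] (Fin d → F)) :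
    ∑ z, (overlap E s g z).card = E.card ^ 2 := by
  simp_rw [overlap, Finset.card_filter]
  rw [Finset.sum_comm, sq, ← smul_eq_mul, ← Finset.sum_const]
  refine Finset.sum_congr rfl fun x _ => ?_
  rw [← _root_.Equiv.sum_comp (Equiv.subRight (s • g x))]
  simp

/-- Without a `k`-star, all but `k |A|` of the ordered pairs in an overlap `A` are distinct with
isotropic difference. -/
lemma card_overlap_sq_le {F : Type*} [Field F] [DecidableEq F] {d : ℕ} {E : Finset (Fin d → F)}
    {s : F} (hs : s ≠ 0) (g : isoGroup F d) (z : Fin d → F) {k : ℕ}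
    (hno : ¬ ContainsPairOfStars E k (s * s)) :
    (overlap E s g.1 z).card ^ 2 ≤ k * (overlap E s g.1 z).card
      + (isoPairs (overlap E s g.1 z)).card := by
  set A := overlap E s g.1 z with hA
  have h1 : ∀ x ∈ A, A.card ≤ k + (A.filter fun y => norm2 (x - y) = 0 ∧ x ≠ y).card := by
    intro x hx
    have hlt : (A.filter fun y => norm2 (x - y) ≠ 0).card < k := by
      by_contra h
      exact hno (star_of_overlap hs g z hx (not_lt.1 h))
    have hsub : A ⊆ (A.filter fun y => norm2 (x - y) ≠ 0) ∪
        ({x} ∪ A.filter fun y => norm2 (x - y) = 0 ∧ x ≠ y) := by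
      intro y hy
      simp only [Finset.mem_union, Finset.mem_filter, Finset.mem_singleton]
      by_cases h : norm2 (x - y) = 0 <;> by_cases h' : x = y <;> simp_all
    have h2 := (Finset.card_le_card hsub).trans (Finset.card_union_le _ _)
    have h3 := Finset.card_union_le {x} (A.filter fun y => norm2 (x - y) = 0 ∧ x ≠ y)
    rw [Finset.card_singleton] at h3
    omega
  have h2 : (isoPairs A).card = ∑ x ∈ A, (A.filter fun y => norm2 (x - y) = 0 ∧ x ≠ y).card := by
    simp_rw [isoPairs, Finset.card_filter]
    rw [Finset.sum_product]
  rw [h2, sq, mul_comm k, ← smul_eq_mul, ← smul_eq_mul, ← Finset.sum_const, ← Finset.sum_const,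
    ← Finset.sum_add_distrib]
  exact Finset.sum_le_sum h1

/-- The translation parameter is determined by the two pairs, so it disappears from the count. -/
lemma sum_isoPairs_overlap_le {F : Type*} [Field F] [Fintype F] [DecidableEq F] {d : ℕ}
    (E : Finset (Fin d → F)) {s : F} (hs : s ≠ 0) (g : isoGroup F d) :
    ∑ z, (isoPairs (overlap E s g.1 z)).card ≤ ∑ p ∈ isoPairs E, ∑ p' ∈ isoPairs E,
      if g.1 (p.1 - p.2) = s⁻¹ • (p'.1 - p'.2) then 1 else 0 := by
  have h1 : ∀ z, (isoPairs (overlap E s g.1 z)).card = ∑ p ∈ isoPairs E,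
      if s • g.1 p.1 + z ∈ E ∧ s • g.1 p.2 + z ∈ E then 1 else 0 := by
    intro z
    rw [← Finset.card_filter]
    congr 1
    ext p
    simp only [isoPairs, overlap, Finset.mem_filter, Finset.mem_product]
    tauto
  simp_rw [h1]
  rw [Finset.sum_comm]
  refine Finset.sum_le_sum fun p hp => ?_
  rw [← Finset.card_filter, ← Finset.card_filter]
  have hp' : (p.1 ∈ E ∧ p.2 ∈ E) ∧ norm2 (p.1 - p.2) = 0 ∧ p.1 ≠ p.2 := by
    simpa [isoPairs] using hp
  refine Finset.card_le_card_of_injOn (fun z => (s • g.1 p.1 + z, s • g.1 p.2 + z)) ?_ ?_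
  · intro z hz
    have hz' : s • g.1 p.1 + z ∈ E ∧ s • g.1 p.2 + z ∈ E := by simpa using hz
    have e : s • g.1 p.1 + z - (s • g.1 p.2 + z) = s • g.1 (p.1 - p.2) := by
      rw [map_sub, smul_sub]; abel
    simp only [isoPairs, Finset.coe_filter, Finset.mem_filter, Finset.mem_product,
      Set.mem_ofPred_eq, e]
    refine ⟨⟨hz', ?_, ?_⟩, ?_⟩
    · rw [norm2_smul, g.2, hp'.2.1, mul_zero]
    · intro h
      exact hp'.2.2 (g.1.injective (smul_right_injective _ hs (add_right_cancel h)))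
    · rw [inv_smul_smul₀ hs]
  · intro z _ z' _ h
    exact add_left_cancel (Prod.ext_iff.1 h).1

/-- The second-moment inequality obtained by averaging the overlaps over all similarities of
ratio `r = s²`, assuming that there is no pair of stars. -/
lemma moment_ineq {F : Type*} [Field F] [Fintype F] [DecidableEq F] {d : ℕ}
    (h2 : (2 : F) ≠ 0) (E : Finset (Fin d → F)) {s : F} (hs : s ≠ 0) {k : ℕ}
    (hno : ¬ ContainsPairOfStars E k (s * s)) :
    ((Fintype.card F : ℝ) - 1) * (E.card : ℝ) ^ 4 ≤
      ((Fintype.card F : ℝ) - 1) * (Fintype.card F : ℝ) ^ d * k * (E.card : ℝ) ^ 2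
      + (Fintype.card F : ℝ) ^ 2 * ((isoPairs E).card : ℝ) ^ 2 := by
  classical
  have : Fintype (isoGroup F d) := Fintype.ofFinite _
  set q := (Fintype.card F : ℝ) with hq
  have hq1 : 1 < q := by rw [hq]; exact_mod_cast Fintype.one_lt_card
  set m := (E.card : ℝ) with hm
  set γ := (Fintype.card (isoGroup F d) : ℝ) with hγ
  have hγ0 : 0 < γ := by rw [hγ]; exact_mod_cast Fintype.card_pos
  have hV : Fintype.card (Fin d → F) = Fintype.card F ^ d := by simp
  -- one isometry, all translations
  have step : ∀ g : isoGroup F d, m ^ 4 ≤ q ^ d * (k * m ^ 2 +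
      ∑ p ∈ isoPairs E, ∑ p' ∈ isoPairs E,
        if g.1 (p.1 - p.2) = s⁻¹ • (p'.1 - p'.2) then (1 : ℝ) else 0) := by
    intro g
    have c1 := sq_sum_le_card_mul_sum_sq (s := (Finset.univ : Finset (Fin d → F)))
      (f := fun z => ((overlap E s g.1 z).card : ℝ))
    have c2 : ∑ z, ((overlap E s g.1 z).card : ℝ) = m ^ 2 := by
      rw [hm]; exact_mod_cast sum_card_overlap E s g.1
    have c3 : ∑ z, ((overlap E s g.1 z).card : ℝ) ^ 2 ≤ k * m ^ 2 +
        ∑ z, ((isoPairs (overlap E s g.1 z)).card : ℝ) := by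
      rw [← c2, Finset.mul_sum, ← Finset.sum_add_distrib]
      refine Finset.sum_le_sum fun z _ => ?_
      exact_mod_cast card_overlap_sq_le hs g z hno
    have c4 : ∑ z, ((isoPairs (overlap E s g.1 z)).card : ℝ) ≤
        ∑ p ∈ isoPairs E, ∑ p' ∈ isoPairs E,
          if g.1 (p.1 - p.2) = s⁻¹ • (p'.1 - p'.2) then (1 : ℝ) else 0 := by
      exact_mod_cast sum_isoPairs_overlap_le E hs g
    rw [c2, Finset.card_univ, hV] at c1
    push_cast at c1
    calc m ^ 4 = (m ^ 2) ^ 2 := by ring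
      _ ≤ _ := c1
      _ ≤ _ := mul_le_mul_of_nonneg_left (by linarith) (by positivity)
  -- averaging over all isometries
  have hsum := Finset.sum_le_sum (s := Finset.univ) fun g _ => step g
  rw [← Finset.mul_sum, Finset.sum_add_distrib, Finset.sum_const, Finset.sum_const,
    Finset.card_univ, nsmul_eq_mul, nsmul_eq_mul, ← hγ] at hsum
  have hJ : q ^ d * (q - 1) * (∑ g : isoGroup F d, ∑ p ∈ isoPairs E, ∑ p' ∈ isoPairs E,
        if g.1 (p.1 - p.2) = s⁻¹ • (p'.1 - p'.2) then (1 : ℝ) else 0)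
      ≤ ((isoPairs E).card : ℝ) ^ 2 * (q ^ 2 * γ) := by
    rw [Finset.sum_comm, Finset.mul_sum, sq, mul_assoc, ← nsmul_eq_mul]
    refine Finset.sum_le_card_nsmul _ _ _ fun p hp => ?_
    rw [Finset.sum_comm, Finset.mul_sum, ← nsmul_eq_mul]
    refine Finset.sum_le_card_nsmul _ _ _ fun p' _ => ?_
    have hp' : (p.1 ∈ E ∧ p.2 ∈ E) ∧ norm2 (p.1 - p.2) = 0 ∧ p.1 ≠ p.2 := by
      simpa [isoPairs] using hp
    have := card_isometry_apply_eq h2 hp'.2.1 (sub_ne_zero.2 hp'.2.2) (s⁻¹ • (p'.1 - p'.2))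
    rw [Finset.sum_boole]
    exact this
  set J := ∑ g : isoGroup F d, ∑ p ∈ isoPairs E, ∑ p' ∈ isoPairs E,
        if g.1 (p.1 - p.2) = s⁻¹ • (p'.1 - p'.2) then (1 : ℝ) else 0
  have h3 : γ * ((q - 1) * m ^ 4) ≤ γ * ((q - 1) * q ^ d * k * m ^ 2
      + q ^ 2 * ((isoPairs E).card : ℝ) ^ 2) := by
    have := mul_le_mul_of_nonneg_left hsum (sub_nonneg.2 hq1.le)
    nlinarith
  exact le_of_mul_le_mul_left h3 hγ0

/-! ### Numerical comparison -/

/-- With `c = m / q ^ (d / 2)` and `Q = √q`, the second-moment inequality contradicts the size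
hypothesis. -/
lemma numeric_contra {c Q k : ℝ} (hQ : 3 ≤ Q ^ 2) (hQ0 : 0 ≤ Q) (hk : 2 ≤ k)
    (hc : 4 + √3 * (k * (k - 1) / 2) ≤ c)
    (h : (Q ^ 2 - 1) * c ^ 2 ≤ (Q ^ 2 - 1) * k + (c + Q) ^ 2) : False := by
  obtain ⟨t, ht⟩ : ∃ t : ℝ, t = √3 := ⟨_, rfl⟩
  have ht2 : t ^ 2 = 3 := by rw [ht]; exact Real.sq_sqrt (by norm_num)
  have ht1 : 1 ≤ t := by rw [ht]; exact Real.one_le_sqrt.2 (by norm_num)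
  rw [← ht] at hc
  have htQ : t ≤ Q := by
    rw [ht]; exact (Real.sqrt_le_left hQ0).2 hQ
  have hc1 : 4 + t * (k - 1) ≤ c := by
    refine le_trans ?_ hc
    have : k - 1 ≤ k * (k - 1) / 2 := by nlinarith
    nlinarith [mul_le_mul_of_nonneg_left this (by linarith : (0 : ℝ) ≤ t)]
  have hct : 4 + t * (k - 2) ≤ c - t := by nlinarith
  have htk : 0 ≤ t * (k - 2) := mul_nonneg (by linarith) (by linarith)
  have hc0 : 0 ≤ c := by linarith
  -- `(c + Q)² / (Q² - 1)` is largest at `Q = √3`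
  have hmax : 2 * (c + Q) ^ 2 ≤ (Q ^ 2 - 1) * (c + t) ^ 2 := by
    have e : (Q ^ 2 - 1) * (c + t) ^ 2 - 2 * (c + Q) ^ 2 =
        c ^ 2 * (Q ^ 2 - 3) + 2 * c * ((Q - t) * (t * Q + 1)) + (Q ^ 2 - 3) := by
      linear_combination (Q ^ 2 - 1 + 2 * c * Q) * ht2
    have p1 : 0 ≤ c ^ 2 * (Q ^ 2 - 3) := mul_nonneg (sq_nonneg c) (by linarith)
    have p2 : 0 ≤ 2 * c * ((Q - t) * (t * Q + 1)) :=
      mul_nonneg (by linarith) (mul_nonneg (by linarith) (by nlinarith))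
    linarith
  have h1 : (Q ^ 2 - 1) * (2 * c ^ 2) ≤ (Q ^ 2 - 1) * (2 * k + (c + t) ^ 2) := by linarith
  have h2 := le_of_mul_le_mul_left h1 (by linarith)
  have h3 : (4 + t * (k - 2)) ^ 2 ≤ (c - t) ^ 2 := pow_le_pow_left₀ (by linarith) hct 2
  have h4 : k - 2 ≤ t * (k - 2) := le_mul_of_one_le_left (by linarith) ht1
  nlinarith [sq_nonneg (t * (k - 2))]

/-- Let `q` be an odd prime power, let `d ≥ 3` be odd, `k ≥ 2`,
and let `r` be a nonzero square in `F_q`. If `𝓔 ⊆ F_q^d` has size at least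
`(4 + √3·C(k,2))·q^(d/2)`, then `𝓔` contains a pair of `k`-stars with dilation ratio `r`. -/
theorem stars_odd_dim {F : Type*} [Field F] [Fintype F]
    (hodd : Odd (Fintype.card F))
    {d : ℕ} (hd3 : 3 ≤ d) (hdodd : Odd d)
    {k : ℕ} (hk : 2 ≤ k)
    {r : F} (hr : r ≠ 0) (hrsq : IsSquare r)
    (𝓔 : Finset (Fin d → F))
    (hcard : (4 + Real.sqrt 3 * (k.choose 2 : ℝ)) * (Fintype.card F : ℝ) ^ ((d : ℝ) / 2)
      ≤ (𝓔.card : ℝ)) :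
    ContainsPairOfStars 𝓔 k r := by
  classical
  obtain ⟨s, rfl⟩ := hrsq
  have hs : s ≠ 0 := left_ne_zero_of_mul hr
  have h2 : ringChar F ≠ 2 := by
    intro h
    have := FiniteField.even_card_of_char_two h
    rw [Nat.odd_iff] at hodd
    omega
  obtain ⟨e, rfl⟩ := hdodd
  by_contra hno
  have hM := moment_ineq (Ring.two_ne_zero h2) 𝓔 hs hno
  have hI := isotropic_le h2 𝓔
  have hII : ((isoPairs 𝓔).card : ℝ) ≤
      ((𝓔 ×ˢ 𝓔).filter fun p => norm2 (p.1 - p.2) = 0).card := by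
    refine Nat.cast_le.2 (Finset.card_le_card fun p hp => ?_)
    rw [isoPairs, Finset.mem_filter] at hp
    exact Finset.mem_filter.2 ⟨hp.1, hp.2.1⟩
  have hq3 : 3 ≤ (Fintype.card F : ℝ) := by
    have h1 : 1 < Fintype.card F := Fintype.one_lt_card
    rw [Nat.odd_iff] at hodd
    have : 3 ≤ Fintype.card F := by omega
    exact_mod_cast this
  set q := (Fintype.card F : ℝ) with hq
  set m := (𝓔.card : ℝ) with hm
  set I := ((isoPairs 𝓔).card : ℝ)
  set Q := √q with hQ
  have hq0 : 0 < q := by linarith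
  have hQq : Q ^ 2 = q := Real.sq_sqrt hq0.le
  have hQ0 : 0 < Q := Real.sqrt_pos.2 hq0
  have hpow : q ^ (((2 * e + 1 : ℕ) : ℝ) / 2) = Q ^ (2 * e + 1) := by
    rw [hQ, Real.sqrt_eq_rpow, ← Real.rpow_natCast, ← Real.rpow_mul hq0.le]
    congr 1; ring
  rw [hpow, Nat.cast_choose_two] at hcard
  set P := Q ^ (2 * e + 1) with hP
  have hP0 : 0 < P := by positivity
  have hk' : (2 : ℝ) ≤ k := by exact_mod_cast hk
  -- `m = c q ^ (d / 2)`
  obtain ⟨c, hc⟩ : ∃ c, m = c * P := ⟨m / P, by field_simp⟩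
  have hcc : 4 + √3 * ((k : ℝ) * (k - 1) / 2) ≤ c := by
    rw [hc] at hcard
    exact le_of_mul_le_mul_right hcard hP0
  have hc0 : 0 < c := by
    have : 0 ≤ √3 * ((k : ℝ) * (k - 1) / 2) := by
      have : (0 : ℝ) ≤ k * (k - 1) := mul_nonneg (by linarith) (by linarith)
      positivity
    linarith
  have hqe : q ^ (e + 1) = Q * P := by rw [hP, ← hQq]; ring
  have hqd : q ^ (2 * e + 1) = P ^ 2 := by rw [hP, ← hQq]; ring
  have hm0 : 0 < m := by rw [hc]; positivity
  have hI0 : 0 ≤ I := Nat.cast_nonneg _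
  have hqI : q * I ≤ m * (m + Q * P) := by
    have := mul_le_mul_of_nonneg_left hII hq0.le
    rw [hqe] at hI
    linarith
  have hqI2 : q ^ 2 * I ^ 2 ≤ (m * (m + Q * P)) ^ 2 := by
    rw [← mul_pow]; exact pow_le_pow_left₀ (by positivity) hqI 2
  rw [hqd] at hM
  have hfin : (m ^ 2 * P ^ 2) * ((Q ^ 2 - 1) * c ^ 2) ≤
      (m ^ 2 * P ^ 2) * ((Q ^ 2 - 1) * k + (c + Q) ^ 2) := by
    have e1 : (m ^ 2 * P ^ 2) * ((Q ^ 2 - 1) * c ^ 2) = (q - 1) * m ^ 4 := by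
      rw [hQq, hc]; ring
    have e2 : (m * (m + Q * P)) ^ 2 = m ^ 2 * P ^ 2 * (c + Q) ^ 2 := by
      rw [hc]; ring
    rw [e1, mul_add, ← e2, hQq]
    linarith
  exact numeric_contra (by rw [hQq]; exact hq3) hQ0.le hk' hcc
    (le_of_mul_le_mul_left hfin (by positivity))
end

section
/- Let q be an odd prime power with q ≥ 5, let d be even with 2 ≤ d ≤ 4, and let r ∈ F_q^*. If 𝓔 ⊆ F_q^d has size at least 36·q^((2d+1)/3), then 𝓔 contains a pair of 4-paths with dilation ratio r. -/
open Finset in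
/-- The number of ordered pairs in `E × E` at distance `t`. -/
def nu {F : Type*} [Field F] [DecidableEq F] {d : ℕ} (E : Finset (Fin d → F)) (t : F) : ℕ :=
  #{p ∈ E ×ˢ E | norm2 (p.1 - p.2) = t}

/-! ### Paths in graphs of large average degree -/

open Finset in
/-- Paths on five vertices in a relation of average degree more than `8`: vertices with at most
four neighbours can be deleted without spoiling the degree condition, and once all degrees are at
least five a path extends greedily. -/
theorem exists_path {V : Type*} [DecidableEq V] (R : V → V → Prop) [DecidableRel R]
    (hsymm : ∀ x y, R x y → R y x) (n : ℕ) (E : Finset V) (hn : #E = n)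
    (hE : 8 * #E < ∑ x ∈ E, #{y ∈ E | R x y}) :
    ∃ x : Fin 5 → V, Function.Injective x ∧ (∀ i, x i ∈ E) ∧
      ∀ i : Fin 4, R (x i.castSucc) (x i.succ) := by
  induction n generalizing E with
  | zero =>
    rw [Finset.card_eq_zero] at hn
    subst hn
    simp at hE
  | succ n ih =>
    by_cases h : ∀ v ∈ E, 5 ≤ #{y ∈ E | R v y}
    · have ext : ∀ v ∈ E, ∀ S : Finset V, #S ≤ 4 → ∃ w ∈ E, R v w ∧ w ∉ S := by
        intro v hv S hS
        have hlt : #S < #{y ∈ E | R v y} := by have := h v hv; omega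
        obtain ⟨w, hw, hwS⟩ := Finset.exists_mem_notMem_of_card_lt_card hlt
        rw [Finset.mem_filter] at hw
        exact ⟨w, hw.1, hw.2, hwS⟩
      obtain ⟨a, ha⟩ : E.Nonempty := by
        rw [← Finset.card_pos]; omega
      obtain ⟨b, hb, hab, hb'⟩ := ext a ha {a} (by simp)
      obtain ⟨c, hc, hbc, hc'⟩ := ext b hb {a, b} (by grind [Finset.card_le_two])
      obtain ⟨e, he, hce, he'⟩ := ext c hc {a, b, c} (by grind [Finset.card_le_three])
      obtain ⟨f, hf, hef, hf'⟩ := ext e he {a, b, c, e} Finset.card_le_four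
      simp only [Finset.mem_insert, Finset.mem_singleton, not_or] at hb' hc' he' hf'
      refine ⟨![a, b, c, e, f], ?_, ?_, ?_⟩
      · intro i j hij
        fin_cases i <;> fin_cases j <;> simp_all
      · intro i
        fin_cases i <;> simp_all
      · intro i
        fin_cases i <;> simp_all
    · push Not at h
      obtain ⟨v, hv, hdeg⟩ := h
      have hcard : #(E.erase v) = n := by rw [Finset.card_erase_of_mem hv]; omega
      have hdecomp : ∀ x, #{y ∈ E | R x y} = #{y ∈ E.erase v | R x y} + (if R x v then 1 else 0) := by
        intro x
        simp only [Finset.card_filter]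
        rw [Finset.sum_erase_add E _ hv]
      have hback : ∑ x ∈ E.erase v, (if R x v then 1 else 0) ≤ #{y ∈ E | R v y} := by
        rw [← Finset.card_filter]
        apply Finset.card_le_card
        intro y hy
        simp only [Finset.mem_filter, Finset.mem_erase] at hy ⊢
        exact ⟨hy.1.2, hsymm _ _ hy.2⟩
      have hsum : ∑ x ∈ E, #{y ∈ E | R x y} =
          ∑ x ∈ E.erase v, #{y ∈ E.erase v | R x y} + ∑ x ∈ E.erase v, (if R x v then 1 else 0)
            + #{y ∈ E | R v y} := by
        rw [← Finset.sum_erase_add E _ hv, Finset.sum_congr rfl (fun x _ => hdecomp x),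
          Finset.sum_add_distrib]
      obtain ⟨x, h1, h2, h3⟩ := ih (E.erase v) hcard (by omega)
      exact ⟨x, h1, fun i => Finset.mem_of_mem_erase (h2 i), h3⟩

/-! ### Character sums over the distances -/

/-- Plancherel for a kernel with orthogonal columns of squared norm `C`. -/
theorem plancherel {X Y : Type*} [Fintype X] [Fintype Y] [DecidableEq Y] (K : X → Y → ℂ) (C : ℝ)
    (hK : ∀ y y', ∑ x, K x y * starRingEnd ℂ (K x y') = if y = y' then (C : ℂ) else 0)
    (c : Y → ℂ) :
    ∑ x, ‖∑ y, c y * K x y‖ ^ 2 = C * ∑ y, ‖c y‖ ^ 2 := by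
  apply Complex.ofReal_injective
  push_cast
  simp_rw [← Complex.mul_conj', map_sum, map_mul, Finset.sum_mul_sum]
  rw [Finset.sum_comm, Finset.mul_sum]
  refine Finset.sum_congr rfl fun y _ => ?_
  rw [Finset.sum_comm]
  calc ∑ y', ∑ x, c y * K x y * (starRingEnd ℂ (c y') * starRingEnd ℂ (K x y'))
      = ∑ y', c y * starRingEnd ℂ (c y') * ∑ x, K x y * starRingEnd ℂ (K x y') := by
        refine Finset.sum_congr rfl fun y' _ => ?_
        rw [Finset.mul_sum]
        exact Finset.sum_congr rfl fun x _ => by ring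
    _ = _ := by
        simp_rw [hK]
        simp
        ring

section
variable {F : Type*} [Field F] [Fintype F] [DecidableEq F]

omit [DecidableEq F] in
theorem norm_addChar (χ : AddChar F ℂ) (x : F) : ‖χ x‖ = 1 := AddChar.norm_apply χ x

omit [DecidableEq F] in
theorem mul_conj_addChar (χ : AddChar F ℂ) (x y : F) :
    χ x * starRingEnd ℂ (χ y) = χ (x - y) := by
  rw [← AddChar.map_neg_eq_conj, ← AddChar.map_add_eq_mul, sub_eq_add_neg]

/-- Orthogonality of characters on `F^d`. -/
theorem sum_addChar_dot {d : ℕ} {χ : AddChar F ℂ} (hχ : χ.IsPrimitive) (b : Fin d → F) :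
    ∑ u : Fin d → F, χ (∑ i, u i * b i) = if b = 0 then (Fintype.card F : ℂ) ^ d else 0 := by
  have h1 : ∀ u : Fin d → F, χ (∑ i, u i * b i) = ∏ i, χ (u i * b i) := fun u =>
    map_sum χ.toAddMonoidHomEquiv _ _
  simp_rw [h1]
  rw [← Fintype.prod_sum (fun i (x : F) => χ (x * b i))]
  simp_rw [AddChar.sum_mulShift _ hχ]
  split_ifs with hb
  · subst hb; simp
  · obtain ⟨i, hi⟩ := Function.ne_iff.mp hb
    exact Finset.prod_eq_zero (Finset.mem_univ i) (by simpa using hi)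

omit [Fintype F] [DecidableEq F] in
theorem norm2_sub {d : ℕ} (x y : Fin d → F) :
    norm2 (x - y) = norm2 x + norm2 y + ∑ i, x i * (-2 * y i) := by
  simp only [norm2, ← Finset.sum_add_distrib, Pi.sub_apply]
  exact Finset.sum_congr rfl fun i _ => by ring

/-- The bound on the nontrivial character sums: Cauchy–Schwarz in `x`, then completion of the sum
to all of `F^d` and Plancherel. -/
theorem charSum_sq_le {d : ℕ} {χ : AddChar F ℂ} (hχ : χ.IsPrimitive) (h2 : (2 : F) ≠ 0)
    (E : Finset (Fin d → F)) {s : F} (hs : s ≠ 0) :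
    ‖∑ p ∈ E ×ˢ E, χ (s * norm2 (p.1 - p.2))‖ ^ 2
      ≤ (Fintype.card F : ℝ) ^ d * (E.card : ℝ) ^ 2 := by
  let c : (Fin d → F) → ℂ := fun y => if y ∈ E then χ (s * norm2 y) else 0
  let K : (Fin d → F) → (Fin d → F) → ℂ := fun x y => χ (∑ i, x i * (-2 * s * y i))
  have hP := plancherel K ((Fintype.card F : ℝ) ^ d) (fun y y' => by
    simp only [K, mul_conj_addChar, ← Finset.sum_sub_distrib, ← mul_sub]
    rw [sum_addChar_dot hχ (fun i => -2 * s * (y i - y' i))]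
    have : (fun i => -2 * s * (y i - y' i)) = 0 ↔ y = y' := by
      simp [funext_iff, h2, hs, sub_eq_zero]
    simp only [this]
    push_cast
    rfl) c
  have hc : ∑ y, ‖c y‖ ^ 2 = E.card := by
    have : ∀ y, ‖c y‖ ^ 2 = if y ∈ E then 1 else 0 := by
      intro y
      simp only [c]
      split_ifs <;> simp
    simp [this]
  have hsplit : ∑ p ∈ E ×ˢ E, χ (s * norm2 (p.1 - p.2))
      = ∑ x ∈ E, χ (s * norm2 x) * ∑ y, c y * K x y := by
    rw [Finset.sum_product]
    refine Finset.sum_congr rfl fun x _ => ?_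
    simp only [c, ite_mul, zero_mul, Finset.sum_ite_mem, Finset.univ_inter, K]
    rw [Finset.mul_sum]
    refine Finset.sum_congr rfl fun y _ => ?_
    rw [← AddChar.map_add_eq_mul, ← AddChar.map_add_eq_mul, norm2_sub, mul_add, mul_add,
      Finset.mul_sum, ← add_assoc]
    congr 2
    exact Finset.sum_congr rfl fun i _ => by ring
  have hle : ‖∑ p ∈ E ×ˢ E, χ (s * norm2 (p.1 - p.2))‖ ≤ ∑ x ∈ E, ‖∑ y, c y * K x y‖ := by
    rw [hsplit]
    refine (norm_sum_le _ _).trans (Finset.sum_le_sum fun x _ => ?_)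
    rw [norm_mul, norm_addChar, one_mul]
  calc ‖∑ p ∈ E ×ˢ E, χ (s * norm2 (p.1 - p.2))‖ ^ 2
      ≤ (∑ x ∈ E, ‖∑ y, c y * K x y‖) ^ 2 := by gcongr
    _ ≤ E.card * ∑ x ∈ E, ‖∑ y, c y * K x y‖ ^ 2 := sq_sum_le_card_mul_sum_sq
    _ ≤ E.card * ∑ x, ‖∑ y, c y * K x y‖ ^ 2 := by
        gcongr
        exact Finset.subset_univ E
    _ = (Fintype.card F : ℝ) ^ d * (E.card : ℝ) ^ 2 := by rw [hP, hc]; ring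

theorem sum_nu {d : ℕ} (E : Finset (Fin d → F)) : ∑ t, (nu E t : ℝ) = (E.card : ℝ) ^ 2 := by
  have h := Finset.card_eq_sum_card_fiberwise (s := E ×ˢ E) (t := Finset.univ)
    (f := fun p => norm2 (p.1 - p.2)) (fun _ _ => Finset.mem_coe.mpr (Finset.mem_univ _))
  rw [Finset.card_product] at h
  rw [sq]
  exact_mod_cast h.symm

/-- The second moment of `nu` is read off from the character sums by Plancherel on `F`. -/
theorem sum_nu_sq {d : ℕ} {χ : AddChar F ℂ} (hχ : χ.IsPrimitive) (E : Finset (Fin d → F)) :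
    ∑ s, ‖∑ p ∈ E ×ˢ E, χ (s * norm2 (p.1 - p.2))‖ ^ 2
      = Fintype.card F * ∑ t, (nu E t : ℝ) ^ 2 := by
  have hP := plancherel (fun s t : F => χ (s * t)) (Fintype.card F) (fun y y' => by
    simp only [mul_conj_addChar, ← mul_sub]
    rw [AddChar.sum_mulShift _ hχ]
    simp [sub_eq_zero]) (fun t => (nu E t : ℂ))
  simp only [Complex.norm_natCast] at hP
  rw [← hP]
  refine Finset.sum_congr rfl fun s _ => ?_
  congr 2
  rw [← Finset.sum_fiberwise (E ×ˢ E) (fun p => norm2 (p.1 - p.2))]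
  refine Finset.sum_congr rfl fun t _ => ?_
  rw [Finset.sum_congr rfl (g := fun _ => χ (s * t))
    (fun p hp => by rw [(Finset.mem_filter.mp hp).2])]
  rw [Finset.sum_const, nsmul_eq_mul, nu]

/-- The trivial character contributes exactly the mean `|E|²/q`, so only the nontrivial character
sums enter the variance of `nu`. -/
theorem variance_le {d : ℕ} (h2 : (2 : F) ≠ 0) (E : Finset (Fin d → F)) :
    ∑ t, ((nu E t : ℝ) - (E.card : ℝ) ^ 2 / Fintype.card F) ^ 2
      ≤ (Fintype.card F : ℝ) ^ d * (E.card : ℝ) ^ 2 := by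
  obtain ⟨χ, hχ⟩ : ∃ χ : AddChar F ℂ, χ.IsPrimitive :=
    ⟨_, AddChar.FiniteField.primitiveChar_to_Complex_isPrimitive F⟩
  have hq : (0 : ℝ) < Fintype.card F := by exact_mod_cast Fintype.card_pos
  have hmom : Fintype.card F * ∑ t, (nu E t : ℝ) ^ 2
      ≤ (E.card : ℝ) ^ 4
        + Fintype.card F * ((Fintype.card F : ℝ) ^ d * (E.card : ℝ) ^ 2) := by
    rw [← sum_nu_sq hχ, ← Finset.add_sum_erase _ _ (Finset.mem_univ 0)]
    have h0 : ‖∑ p ∈ E ×ˢ E, χ (0 * norm2 (p.1 - p.2))‖ ^ 2 = (E.card : ℝ) ^ 4 := by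
      simp
      ring
    rw [h0]
    gcongr
    refine (Finset.sum_le_card_nsmul _ _ _ fun s hs =>
      charSum_sq_le hχ h2 E (Finset.ne_of_mem_erase hs)).trans ?_
    rw [nsmul_eq_mul]
    gcongr
    exact Finset.card_le_univ _
  have hexp : ∑ t, ((nu E t : ℝ) - (E.card : ℝ) ^ 2 / Fintype.card F) ^ 2
      = ∑ t, (nu E t : ℝ) ^ 2 - (E.card : ℝ) ^ 4 / Fintype.card F := by
    simp_rw [sub_sq]
    rw [Finset.sum_add_distrib, Finset.sum_sub_distrib, ← Finset.sum_mul, ← Finset.mul_sum,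
      sum_nu, Finset.sum_const, nsmul_eq_mul, Finset.card_univ]
    field_simp
    ring
  rw [hexp, sub_le_iff_le_add, ← mul_le_mul_iff_right₀ hq]
  refine hmom.trans (le_of_eq ?_)
  field_simp
  ring

/-! ### Finding a popular distance -/

omit [Fintype F] in
/-- A popular nonzero distance is the common edge length of a path on five vertices. -/
theorem exists_path_of_nu {d : ℕ} (E : Finset (Fin d → F)) (t : F)
    (h : 8 * E.card < nu E t) :
    ∃ x : Fin 5 → (Fin d → F), Function.Injective x ∧ (∀ i, x i ∈ E) ∧
      ∀ i : Fin 4, norm2 (x i.succ - x i.castSucc) = t := by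
  have hneg : ∀ x y : Fin d → F, norm2 (x - y) = norm2 (y - x) := fun x y =>
    Finset.sum_congr rfl fun i _ => by simp only [Pi.sub_apply]; ring
  obtain ⟨x, h1, h2, h3⟩ := exists_path (fun x y : Fin d → F => norm2 (x - y) = t)
    (fun x y hxy => (hneg y x).trans hxy) _ E rfl (by
      refine h.trans_le (le_of_eq ?_)
      rw [nu, Finset.card_filter, Finset.sum_product]
      simp_rw [Finset.card_filter])
  exact ⟨x, h1, h2, fun i => (hneg _ _).trans (h3 i)⟩

/-- If fewer than half of the nonzero elements are exceptional, some `t ≠ 0` has both `t` and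
`r * t` unexceptional. -/
theorem exists_good (B : Finset F) {r : F} (hr : r ≠ 0) (hB : 2 * B.card + 1 < Fintype.card F) :
    ∃ t : F, t ≠ 0 ∧ t ∉ B ∧ r * t ∉ B := by
  have hlt : ({0} ∪ (B ∪ B.image (fun u => r⁻¹ * u))).card < Finset.card (Finset.univ : Finset F) := by
    have h1 := Finset.card_union_le ({0} : Finset F) (B ∪ B.image (fun u => r⁻¹ * u))
    have h2 := Finset.card_union_le B (B.image (fun u => r⁻¹ * u))
    have h3 : (B.image (fun u => r⁻¹ * u)).card ≤ B.card := Finset.card_image_le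
    rw [Finset.card_singleton] at h1
    rw [Finset.card_univ]
    omega
  obtain ⟨t, -, ht⟩ := Finset.exists_mem_notMem_of_card_lt_card hlt
  simp only [Finset.mem_union, Finset.mem_singleton, Finset.mem_image, not_or, not_exists,
    not_and] at ht
  exact ⟨t, ht.1, ht.2.1, fun h => ht.2.2 _ h (inv_mul_cancel_left₀ hr t)⟩

end

/-- Let `q` be an odd prime power with `q ≥ 5`, let `d` be even with
`2 ≤ d ≤ 4`, `r ∈ F_q^*`. If `𝓔 ⊆ F_q^d` has size at least `36·q^((2d+1)/3)`,
then `𝓔` contains a pair of `4`-paths with dilation ratio `r`. -/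
theorem paths_low_even_dim {F : Type*} [Field F] [Fintype F]
    (hodd : Odd (Fintype.card F)) (hq5 : 5 ≤ Fintype.card F)
    {d : ℕ} (hd2 : 2 ≤ d) (hd4 : d ≤ 4) (hdeven : Even d)
    {r : F} (hr : r ≠ 0)
    (𝓔 : Finset (Fin d → F))
    (hcard : 36 * (Fintype.card F : ℝ) ^ ((2 * (d : ℝ) + 1) / 3) ≤ (𝓔.card : ℝ)) :
    ContainsPairOfPaths 𝓔 4 r := by
  classical
  have h2 : (2 : F) ≠ 0 := by
    apply Ring.two_ne_zero
    intro h
    have := FiniteField.even_card_of_char_two h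
    rw [Nat.odd_iff] at hodd
    omega
  have hvar := variance_le h2 𝓔
  have hq5' : (5 : ℝ) ≤ Fintype.card F := by exact_mod_cast hq5
  set q : ℝ := (Fintype.card F : ℝ) with hqdef
  set n : ℝ := (𝓔.card : ℝ) with hndef
  have hq1 : (1 : ℝ) ≤ q := by linarith
  have hq0 : (0 : ℝ) < q := by linarith
  have hdR : (2 : ℝ) ≤ d := by exact_mod_cast hd2
  have hn1 : 36 * q ≤ n := by
    refine le_trans ?_ hcard
    gcongr
    calc q = q ^ (1 : ℝ) := (Real.rpow_one q).symm
      _ ≤ _ := Real.rpow_le_rpow_of_exponent_le hq1 (by linarith)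
  have hn2 : 1296 * (q ^ d * q) ≤ n ^ 2 := by
    calc 1296 * (q ^ d * q) = 1296 * q ^ ((d : ℝ) + 1) := by
          rw [Real.rpow_add hq0, Real.rpow_natCast, Real.rpow_one]
      _ ≤ 1296 * q ^ ((2 * (d : ℝ) + 1) / 3 * (2 : ℕ)) := by
          gcongr
          push_cast; linarith
      _ = (36 * q ^ ((2 * (d : ℝ) + 1) / 3)) ^ 2 := by
          rw [Real.rpow_mul_natCast hq0.le]; ring
      _ ≤ n ^ 2 := by gcongr
  have hn0 : 0 < n := by linarith
  -- The exceptional distances, those with fewer than half of the expected number of pairs.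
  let B : Finset F := {t | (nu 𝓔 t : ℝ) < n ^ 2 / (2 * q)}
  have hB : (B.card : ℝ) * (n ^ 2 / (2 * q)) ^ 2 ≤ q ^ d * n ^ 2 := by
    refine le_trans ?_ hvar
    rw [← nsmul_eq_mul]
    refine (Finset.card_nsmul_le_sum B _ _ fun t ht => ?_).trans
      (Finset.sum_le_univ_sum_of_nonneg fun t => sq_nonneg _)
    have ht' : (nu 𝓔 t : ℝ) < n ^ 2 / (2 * q) := (Finset.mem_filter.mp ht).2
    have hhalf : n ^ 2 / q = n ^ 2 / (2 * q) + n ^ 2 / (2 * q) := by field_simp; ring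
    rw [← neg_sq ((nu 𝓔 t : ℝ) - n ^ 2 / q)]
    have hpos : 0 ≤ n ^ 2 / (2 * q) := by positivity
    gcongr
    linarith
  have hBq : (B.card : ℝ) * 324 ≤ q := by
    have e : (B.card : ℝ) * (n ^ 2 / (2 * q)) ^ 2 = (B.card * n ^ 2) * (n ^ 2 / (4 * q ^ 2)) := by
      field_simp; ring
    have e' : q ^ d * n ^ 2 = (4 * (q ^ d * q) * q) * (n ^ 2 / (4 * q ^ 2)) * 1 := by
      field_simp
    rw [e, e', mul_one] at hB
    have h3 : (B.card : ℝ) * n ^ 2 ≤ 4 * (q ^ d * q) * q :=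
      le_of_mul_le_mul_right hB (by positivity)
    have h4 : 4 * (q ^ d * q) * q ≤ n ^ 2 / 324 * q := by
      gcongr
      linarith
    have hn20 : 0 < n ^ 2 := by positivity
    refine le_of_mul_le_mul_right ?_ hn20
    linarith
  obtain ⟨t, ht0, ht1, ht2⟩ := exists_good B hr (by
    have : (2 * (B.card : ℝ) + 1) < Fintype.card F := by linarith
    exact_mod_cast this)
  have hgood : ∀ u ∉ B, 8 * 𝓔.card < nu 𝓔 u := by
    intro u hu
    have hu' : n ^ 2 / (2 * q) ≤ nu 𝓔 u := by
      by_contra! h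
      exact hu (Finset.mem_filter.mpr ⟨Finset.mem_univ _, h⟩)
    have h18 : 18 * n ≤ n ^ 2 / (2 * q) := by
      rw [le_div_iff₀ (by positivity)]
      nlinarith
    have : 8 * n < nu 𝓔 u := by linarith
    rw [hndef] at this
    exact_mod_cast this
  obtain ⟨x, hx1, hx2, hx3⟩ := exists_path_of_nu 𝓔 t (hgood t ht1)
  obtain ⟨y, hy1, hy2, hy3⟩ := exists_path_of_nu 𝓔 (r * t) (hgood _ ht2)
  exact ⟨x, y, hx1, hy1, hx2, hy2, fun i => by
    rw [hx3, hy3]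
    exact ⟨rfl, mul_ne_zero hr ht0⟩⟩
end
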